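/- (Claim (2.4)) Assume d ≥ 4 is such that 7(2/(d+1) + (1 − 2/(d+1)) q(d−1)) < 1. Then for any u > 0, lim_{γ→0} liminf_{N→∞} P[D_{γ,uN^{d−1}}] = 1, where D_{γ,t} = ∩_{|j| ≤ 2N^{2d−1}} {D^j_t > γ N^{2d}}. -/

import Mathlib

open MeasureTheory Filter
open scoped ENNReal Classical

namespace DiscCyl

/-- The lattice `ℤ^{d+1}`. -/
abbrev Lat (d : ℕ) := Fin (d + 1) → ℤ

/-- The discrete cylinder `E = (ℤ/Nℤ)^d × ℤ`. -/
abbrev Cyl (d N : ℕ) := (Fin d → ZMod N) × ℤ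

instance (N : ℕ) : MeasurableSpace (ZMod N) := ⊤

instance (N : ℕ) : Countable (ZMod N) := by
  cases N with
  | zero => exact inferInstanceAs (Countable ℤ)
  | succ n => exact inferInstanceAs (Countable (Fin (n + 1)))

/-- The canonical projection `π_E : ℤ^{d+1} → E`. -/
def projE (d N : ℕ) (v : Lat d) : Cyl d N :=
  (fun i => (v i.castSucc : ZMod N), v (Fin.last d))

/-- The `2(d+1)` unit vectors `±e_i` of `ℤ^{d+1}`. -/
def unitVecs (d : ℕ) : Finset (Lat d) :=
  Finset.image (fun p : Fin (d + 1) × Bool => Pi.single p.1 (if p.2 then (1 : ℤ) else -1))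
    Finset.univ

/-- One-step transition probability of simple random walk on the cylinder:
each of the `2(d+1)` unit moves of `ℤ^{d+1}` is taken with probability `1/(2(d+1))`
and projected to `E`. -/
noncomputable def stepProb (d N : ℕ) (x y : Cyl d N) : ℝ≥0∞ :=
  (((unitVecs d).filter fun e => x + projE d N e = y).card : ℝ≥0∞) / (2 * (d + 1))

/-- `Pl` is the family of laws (indexed by the starting point) of simple random walk
on the cylinder `E = (ℤ/Nℤ)^d × ℤ`. -/
def IsCylRW (d N : ℕ) (Pl : Cyl d N → Measure (ℕ → Cyl d N)) : Prop :=
  (∀ x, IsProbabilityMeasure (Pl x)) ∧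
    ∀ (x : Cyl d N) (n : ℕ) (γ : ℕ → Cyl d N),
      Pl x {ω | ∀ i ≤ n, ω i = γ i} =
        (if γ 0 = x then 1 else 0) * ∏ i ∈ Finset.range n, stepProb d N (γ i) (γ (i + 1))

/-- The lattice `ℤ^ν`. -/
abbrev ZLat (ν : ℕ) := Fin ν → ℤ

/-- Unit vectors of `ℤ^ν`. -/
def zUnitVecs (ν : ℕ) : Set (ZLat ν) :=
  {v | ∃ i, v = Pi.single i 1 ∨ v = Pi.single i (-1)}

/-- One-step transition probability of simple random walk on `ℤ^ν`. -/
noncomputable def zStep (ν : ℕ) (x y : ZLat ν) : ℝ≥0∞ :=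
  if y - x ∈ zUnitVecs ν then (2 * ν : ℝ≥0∞)⁻¹ else 0

/-- `Ql` is the family of laws of simple random walk on `ℤ^ν`. -/
def IsLatRW (ν : ℕ) (Ql : ZLat ν → Measure (ℕ → ZLat ν)) : Prop :=
  (∀ x, IsProbabilityMeasure (Ql x)) ∧
    ∀ (x : ZLat ν) (n : ℕ) (γ : ℕ → ZLat ν),
      Ql x {ω | ∀ i ≤ n, ω i = γ i} =
        (if γ 0 = x then 1 else 0) * ∏ i ∈ Finset.range n, zStep ν (γ i) (γ (i + 1))

/-- `q(ν)`: the return probability to the origin of simple random walk on `ℤ^ν`. -/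
noncomputable def retProb (ν : ℕ) (Ql : ZLat ν → Measure (ℕ → ZLat ν)) : ℝ :=
  ((Ql 0) {ω | ∃ n : ℕ, 1 ≤ n ∧ ω n = 0}).toReal

/-- Entrance time `H_U` (with value `⊤` if `U` is never entered). -/
noncomputable def entT {X : Type*} (U : Set X) (ω : ℕ → X) : ℕ∞ :=
  sInf {t : ℕ∞ | ∃ n : ℕ, ω n ∈ U ∧ t = n}

/-- Exit time `T_U`. -/
noncomputable def exitT {X : Type*} (U : Set X) (ω : ℕ → X) : ℕ∞ :=
  entT Uᶜ ω

/-- `after t f ω = t + f (θ_t ω)`, with value `⊤` when `t = ⊤`. -/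
noncomputable def after {X : Type*} (t : ℕ∞) (f : (ℕ → X) → ℕ∞) (ω : ℕ → X) : ℕ∞ :=
  t.recTopCoe ⊤ fun m => (m : ℕ∞) + f fun k => ω (k + m)

/-- The block `C_j = (ℤ/Nℤ)^d × ([(j-3/4)N, (j+3/4)N] ∩ ℤ)`. -/
def Cblk (d N : ℕ) (j : ℤ) : Set (Cyl d N) :=
  {x | ((j : ℝ) - 3 / 4) * N ≤ (x.2 : ℝ) ∧ (x.2 : ℝ) ≤ ((j : ℝ) + 3 / 4) * N}

/-- The block `B_j = (ℤ/Nℤ)^d × [(j-1)N, (j+1)N]`. -/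
def Bblk (d N : ℕ) (j : ℤ) : Set (Cyl d N) :=
  {x | (j - 1) * (N : ℤ) ≤ x.2 ∧ x.2 ≤ (j + 1) * (N : ℤ)}

/-- The block `B̃_j = (ℤ/Nℤ)^d × [(j-2)N+1, (j+2)N-1]`. -/
def Btl (d N : ℕ) (j : ℤ) : Set (Cyl d N) :=
  {x | (j - 2) * (N : ℤ) + 1 ≤ x.2 ∧ x.2 ≤ (j + 2) * (N : ℤ) - 1}

/-- `D^j_1`: time of the first departure from `B̃_j` after the first return to `B_j`. -/
noncomputable def oneExc (d N : ℕ) (j : ℤ) (ω : ℕ → Cyl d N) : ℕ∞ :=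
  after (entT (Bblk d N j) ω) (exitT (Btl d N j)) ω

/-- `D^j_k`: time of the `k`-th departure from `B̃_j` (after successive returns to `B_j`). -/
noncomputable def DD (d N : ℕ) (j : ℤ) : ℕ → (ℕ → Cyl d N) → ℕ∞
  | 0, _ => 0
  | k + 1, ω => after (DD d N j k ω) (oneExc d N j) ω

/-- The law `P` of the walk with initial distribution uniform on `B_0`. -/
noncomputable def lawP (d N : ℕ) (Pl : Cyl d N → Measure (ℕ → Cyl d N)) :
    Measure (ℕ → Cyl d N) :=
  ((N : ℝ≥0∞) ^ d * (2 * N + 1))⁻¹ •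
    Measure.sum fun x : Cyl d N => if x ∈ Bblk d N 0 then Pl x else 0

/-- Nearest-neighbour adjacency on the cylinder. -/
def adj (d N : ℕ) (x y : Cyl d N) : Prop :=
  x ≠ y ∧ ∃ e ∈ unitVecs d, y = x + projE d N e

/-- `x` and `y` are connected by a nearest-neighbour path inside `S`. -/
def connIn (d N : ℕ) (S : Set (Cyl d N)) (x y : Cyl d N) : Prop :=
  Relation.ReflTransGen (fun a b => a ∈ S ∧ b ∈ S ∧ adj d N a b) x y

/-- `S` is a connected set. -/
def IsConnIn (d N : ℕ) (S : Set (Cyl d N)) : Prop :=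
  ∀ x ∈ S, ∀ y ∈ S, connIn d N S x y

/-- The boundary `∂U`. -/
def bdry (d N : ℕ) (U : Set (Cyl d N)) : Set (Cyl d N) :=
  {x | x ∉ U ∧ ∃ y ∈ U, adj d N x y}

/-- `ℓ^∞`-norm on `ℤ^{d+1}`. -/
def linf {d : ℕ} (v : Lat d) : ℕ := Finset.univ.sup fun i => (v i).natAbs

/-- `ℓ^∞`-distance induced on the cylinder. -/
noncomputable def cylDist (d N : ℕ) (x y : Cyl d N) : ℕ :=
  sInf {r : ℕ | ∃ v : Lat d, projE d N v = y - x ∧ linf v = r}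

/-- `S` has `ℓ^∞`-diameter at least `L`. -/
def diamGE (d N : ℕ) (S : Set (Cyl d N)) (L : ℕ) : Prop :=
  ∃ x ∈ S, ∃ y ∈ S, L ≤ cylDist d N x y

/-- `X_{[0,n]}`: the set of points visited up to time `n`. -/
def ran {X : Type*} (ω : ℕ → X) (n : ℕ) : Set X := {y | ∃ i ≤ n, ω i = y}

/-- The set of points visited up to the (possibly infinite) time `t`. -/
def ranE {X : Type*} (ω : ℕ → X) (t : ℕ∞) : Set X :=
  {y | ∃ i : ℕ, (i : ℕ∞) ≤ t ∧ ω i = y}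

/-- `L_m`: projections to `E` of `m`-dimensional affine coordinate lattices of `ℤ^{d+1}`. -/
def Lcoll (d N m : ℕ) : Set (Set (Cyl d N)) :=
  {F | ∃ I : Finset (Fin (d + 1)), I.card = m ∧ ∃ y : Lat d,
      F = (fun v => projE d N (y + v)) '' {v : Lat d | ∀ i ∉ I, v i = 0}}

/-- `A^j_m`: nonempty subsets of `C_j` contained in some `F ∈ L_m`. -/
def Adm (d N : ℕ) (j : ℤ) (m : ℕ) : Set (Finset (Cyl d N)) :=
  {A | A.Nonempty ∧ ↑A ⊆ Cblk d N j ∧ ∃ F ∈ Lcoll d N m, (↑A : Set (Cyl d N)) ⊆ F}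

/-- The segment `{x + k·e : 0 ≤ k ≤ L}` (addition via `π_E`). -/
def segment (d N : ℕ) (x : Cyl d N) (e : Lat d) (L : ℕ) : Set (Cyl d N) :=
  {y | ∃ k : ℕ, k ≤ L ∧ y = x + projE d N ((k : ℤ) • e)}

/-- The event `V_{K,j,t}` (with `k = ⌊t⌋` excursions). -/
def Vev (d N : ℕ) (K : ℝ) (j : ℤ) (k : ℕ) : Set (ℕ → Cyl d N) :=
  {ω | ∀ x ∈ Cblk d N j, ∀ e ∈ unitVecs d, ∃ i : ℕ, (i : ℝ) < Real.sqrt N ∧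
      ∀ l : ℕ, i ≤ l → l ≤ i + ⌊K * Real.log N⌋₊ →
        x + projE d N ((l : ℤ) • e) ∉ ranE ω (DD d N j k ω)}

/-- The event `U_{K,j,t}` (with `k = ⌊t⌋` excursions). -/
def Uev (d N : ℕ) (K : ℝ) (j : ℤ) (k : ℕ) : Set (ℕ → Cyl d N) :=
  {ω | ∀ F ∈ Lcoll d N 2, ∀ n : ℕ, (n : ℕ∞) ≤ DD d N j k ω →
      ∀ O₁ O₂ : Set (Cyl d N),
        O₁ ⊆ (F ∩ Cblk d N j) \ ran ω n → O₂ ⊆ (F ∩ Cblk d N j) \ ran ω n →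
        IsConnIn d N O₁ → IsConnIn d N O₂ →
        diamGE d N O₁ ⌊K * Real.log N⌋₊ → diamGE d N O₂ ⌊K * Real.log N⌋₊ →
        ∀ p ∈ O₁, ∀ q ∈ O₂, connIn d N ((F ∩ Cblk d N j) \ ran ω n) p q}

/-- A (finite) set `S` disconnects the cylinder. -/
def Disconnects (d N : ℕ) (S : Set (Cyl d N)) : Prop :=
  S.Finite ∧ ∃ M₀ : ℕ, ∀ M : ℕ, M₀ ≤ M → ∀ x y : Cyl d N,
    (M : ℤ) ≤ x.2 → y.2 ≤ -(M : ℤ) → ¬ connIn d N Sᶜ x y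

/-- The disconnection time `T_N`. -/
noncomputable def discT (d N : ℕ) (ω : ℕ → Cyl d N) : ℕ∞ :=
  sInf {t : ℕ∞ | ∃ n : ℕ, Disconnects d N (ran ω n) ∧ t = n}

/-- `r ≤ t` for `t : ℕ∞` and a real threshold `r` (trivially true when `t = ⊤`). -/
def geReal (t : ℕ∞) (r : ℝ) : Prop := ∀ n : ℕ, t = (n : ℕ∞) → r ≤ n

/-- `r < t` for `t : ℕ∞` and a real threshold `r` (trivially true when `t = ⊤`). -/
def gtReal (t : ℕ∞) (r : ℝ) : Prop := ∀ n : ℕ, t = (n : ℕ∞) → r < n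

/-- `φ_j(z) = E_z[exp(λ Σ_{x∈A} 1{H_x < T_{B̃_j}})]`. -/
noncomputable def phi (d N : ℕ) (Pl : Cyl d N → Measure (ℕ → Cyl d N)) (j : ℤ) (lam : ℝ)
    (A : Finset (Cyl d N)) (z : Cyl d N) : ℝ :=
  ∫ ω, Real.exp (lam * ∑ x ∈ A, if entT {x} ω < exitT (Btl d N j) ω then (1 : ℝ) else 0)
    ∂(Pl z)

/-- `‖φ_j‖_∞`. -/
noncomputable def phiSup (d N : ℕ) (Pl : Cyl d N → Measure (ℕ → Cyl d N)) (j : ℤ) (lam : ℝ)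
    (A : Finset (Cyl d N)) : ℝ :=
  ⨆ z : Cyl d N, phi d N Pl j lam A z

/-- `q_N = sup {P_z[H_F < T_{B̃_j}] : F ∈ L_m, z ∈ ∂F}`. -/
noncomputable def qNval (d N m : ℕ) (Pl : Cyl d N → Measure (ℕ → Cyl d N)) (j : ℤ) : ℝ :=
  sSup {r : ℝ | ∃ F ∈ Lcoll d N m, ∃ z ∈ bdry d N F,
      r = ((Pl z) {ω | entT F ω < exitT (Btl d N j) ω}).toReal}

/-- The times `τ_k`: `τ_0` is the entrance time of `(ℤ/Nℤ)^d × Nℤ`, and `τ_{k+1}` is the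
first time after `τ_k` at which the vertical component has moved by exactly `N`. -/
noncomputable def tauT (d N : ℕ) : ℕ → (ℕ → Cyl d N) → ℕ∞
  | 0, ω => entT {x : Cyl d N | (N : ℤ) ∣ x.2} ω
  | k + 1, ω =>
      (tauT d N k ω).recTopCoe ⊤ fun m =>
        sInf {t : ℕ∞ | ∃ n : ℕ, m < n ∧ ((ω n).2 - (ω m).2).natAbs = N ∧ t = n}

/-- `*`-adjacency on `ℤ²`. -/
def starAdj (x y : ℤ × ℤ) : Prop :=
  x ≠ y ∧ (x.1 - y.1).natAbs ≤ 1 ∧ (x.2 - y.2).natAbs ≤ 1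


instance instDiscZMod (N : ℕ) : DiscreteMeasurableSpace (ZMod N) := ⟨fun _ => trivial⟩

/-- `F` depends only on the path up to time `n`. -/
def Adp {X β : Type*} (n : ℕ) (F : (ℕ → X) → β) : Prop :=
  ∀ ω ω' : ℕ → X, (∀ i ≤ n, ω i = ω' i) → F ω = F ω'

/-- Extension of a finite path to an infinite one. -/
def ext {X : Type*} (n : ℕ) (g : Fin (n + 1) → X) : ℕ → X :=
  fun i => g ⟨min i n, by omega⟩

theorem Adp.eq_ext {X β : Type*} {n : ℕ} {F : (ℕ → X) → β} (h : Adp n F) (ω : ℕ → X) :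
    F ω = F (ext n fun i : Fin (n + 1) => ω i) := by
  apply h
  intro i hi
  simp [ext, hi]

theorem Adp.measurable {d N n : ℕ} {F : (ℕ → Cyl d N) → ℝ≥0∞} (h : Adp n F) :
    Measurable F := by
  have : F = (fun g : Fin (n + 1) → Cyl d N => F (ext n g)) ∘
      (fun ω => fun i : Fin (n + 1) => ω i) := by
    funext ω
    exact h.eq_ext ω
  rw [this]
  refine (measurable_of_countable _).comp ?_
  exact measurable_pi_lambda _ fun i => measurable_pi_apply _

theorem lintegral_adp {d N n : ℕ} (μ : Measure (ℕ → Cyl d N))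
    {F : (ℕ → Cyl d N) → ℝ≥0∞} (h : Adp n F) :
    ∫⁻ ω, F ω ∂μ = ∑' g : Fin (n + 1) → Cyl d N,
      F (ext n g) * μ {ω | ∀ i ≤ n, ω i = ext n g i} := by
  have hm : Measurable (fun ω : ℕ → Cyl d N => fun i : Fin (n + 1) => ω i) :=
    measurable_pi_lambda _ fun i => measurable_pi_apply _
  have h1 : ∫⁻ ω, F ω ∂μ = ∫⁻ g, F (ext n g)
      ∂(μ.map (fun ω : ℕ → Cyl d N => fun i : Fin (n + 1) => ω i)) := by
    rw [lintegral_map (measurable_of_countable _) hm]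
    exact lintegral_congr fun ω => h.eq_ext ω
  rw [h1, lintegral_countable']
  refine tsum_congr fun g => ?_
  rw [Measure.map_apply hm (measurableSet_singleton _)]
  congr 2
  ext ω
  simp only [Set.mem_preimage, Set.mem_singleton_iff, Set.mem_ofPred_eq, ext]
  constructor
  · intro hg i hi
    rw [← hg]
    simp [hi]
  · intro hg
    funext i
    have := hg i (by omega)
    rw [this]
    congr 1
    ext
    simp
    omega

theorem lintegral_step {d N n : ℕ} {Pl : Cyl d N → Measure (ℕ → Cyl d N)}
    (hP : IsCylRW d N Pl) (x : Cyl d N) {F : (ℕ → Cyl d N) → ℝ≥0∞}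
    {G : (ℕ → Cyl d N) → Cyl d N → ℝ≥0∞} (hF : Adp n F) (hG : ∀ y, Adp n fun ω => G ω y)
    (c : ℝ≥0∞)
    (h : ∀ ω, ∑' y, stepProb d N (ω n) y * G ω y ≤ c) :
    ∫⁻ ω, F ω * G ω (ω (n + 1)) ∂(Pl x) ≤ c * ∫⁻ ω, F ω ∂(Pl x) := by
  have hA : Adp (n + 1) fun ω => F ω * G ω (ω (n + 1)) := by
    intro ω ω' hω
    have h1 := hF ω ω' fun i hi => hω i (by omega)
    have h2 := hG (ω (n + 1)) ω ω' fun i hi => hω i (by omega)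
    simp only at h2 ⊢
    rw [h1, h2, hω (n + 1) le_rfl]
  rw [lintegral_adp _ hA, lintegral_adp _ hF]
  rw [← (Fin.snocEquiv (fun _ : Fin (n + 2) => Cyl d N)).tsum_eq]
  rw [ENNReal.tsum_prod', ENNReal.tsum_comm, ← ENNReal.tsum_mul_left]
  refine ENNReal.tsum_le_tsum fun g => ?_
  have e1 : ∀ y : Cyl d N, ∀ i ≤ n,
      ext (n + 1) (Fin.snocEquiv (fun _ : Fin (n + 2) => Cyl d N) (y, g)) i = ext n g i := by
    intro y i hi
    have : (⟨min i (n + 1), by omega⟩ : Fin (n + 2)) =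
        Fin.castSucc ⟨min i n, by omega⟩ := by
      ext; simp; omega
    simp only [ext, Fin.snocEquiv, Equiv.coe_fn_mk]
    rw [this, Fin.snoc_castSucc]
  have e2 : ∀ y : Cyl d N,
      ext (n + 1) (Fin.snocEquiv (fun _ : Fin (n + 2) => Cyl d N) (y, g)) (n + 1) = y := by
    intro y
    have : (⟨min (n + 1) (n + 1), by omega⟩ : Fin (n + 2)) = Fin.last (n + 1) := by
      ext; simp
    simp only [ext, Fin.snocEquiv, Equiv.coe_fn_mk]
    rw [this, Fin.snoc_last]
  have key : ∀ y : Cyl d N,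
      F (ext (n + 1) (Fin.snocEquiv (fun _ : Fin (n + 2) => Cyl d N) (y, g))) *
        G (ext (n + 1) (Fin.snocEquiv (fun _ : Fin (n + 2) => Cyl d N) (y, g)))
          (ext (n + 1) (Fin.snocEquiv (fun _ : Fin (n + 2) => Cyl d N) (y, g)) (n + 1)) *
        (Pl x) {ω | ∀ i ≤ n + 1, ω i =
          ext (n + 1) (Fin.snocEquiv (fun _ : Fin (n + 2) => Cyl d N) (y, g)) i} =
      (F (ext n g) * (Pl x) {ω | ∀ i ≤ n, ω i = ext n g i}) *
        (stepProb d N (ext n g n) y * G (ext n g) y) := by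
    intro y
    rw [hP.2, hP.2, Finset.prod_range_succ, e2 y, e1 y n le_rfl, e1 y 0 (Nat.zero_le _)]
    rw [hF _ _ (e1 y)]
    have h2 := hG y _ _ (e1 y)
    simp only at h2
    rw [h2]
    have h3 : ∀ i ∈ Finset.range n,
        stepProb d N
          (ext (n + 1) (Fin.snocEquiv (fun _ : Fin (n + 2) => Cyl d N) (y, g)) i)
          (ext (n + 1) (Fin.snocEquiv (fun _ : Fin (n + 2) => Cyl d N) (y, g)) (i + 1)) =
        stepProb d N (ext n g i) (ext n g (i + 1)) := by
      intro i hi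
      rw [Finset.mem_range] at hi
      rw [e1 y i (by omega), e1 y (i + 1) (by omega)]
    rw [Finset.prod_congr rfl h3]
    ring
  simp_rw [key]
  rw [ENNReal.tsum_mul_left, mul_comm c]
  gcongr
  exact h _

/-- Vertical step. -/
def xi {d N : ℕ} (ω : ℕ → Cyl d N) (k : ℕ) : ℤ := (ω (k + 1)).2 - (ω k).2

theorem tsum_step {d N : ℕ} (x : Cyl d N) (f : Cyl d N → ℝ≥0∞) :
    ∑' y, stepProb d N x y * f y =
      (∑ p : Fin (d + 1) × Bool,
        f (x + projE d N (Pi.single p.1 (if p.2 then (1 : ℤ) else -1)))) / (2 * (d + 1)) := by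
  have h1 : ∀ y, stepProb d N x y * f y =
      ∑ e ∈ unitVecs d, if x + projE d N e = y then f y / (2 * (d + 1)) else 0 := by
    intro y
    rw [← Finset.sum_filter, Finset.sum_const, nsmul_eq_mul, stepProb]
    simp only [div_eq_mul_inv]
    ring
  simp_rw [h1]
  rw [Summable.tsum_finsetSum (fun _ _ => ENNReal.summable)]
  simp_rw [tsum_ite_eq']
  rw [unitVecs, Finset.sum_image]
  · simp only [div_eq_mul_inv, Finset.sum_mul]
  rintro ⟨i, b⟩ - ⟨j, c⟩ - h
  simp only at h
  have hi := congrFun h i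
  rw [Pi.single_eq_same] at hi
  by_cases hij : i = j
  · subst hij
    rw [Pi.single_eq_same] at hi
    cases b <;> cases c <;> simp at hi ⊢
  · rw [Pi.single_eq_of_ne hij] at hi
    cases b <;> simp at hi

theorem tsum_step_le {d N : ℕ} (x : Cyl d N) (φ : ℤ → ℝ≥0∞) (h0 : φ 0 ≤ 1)
    (h1 : φ 1 + φ (-1) ≤ 2) :
    ∑' y, stepProb d N x y * φ (y.2 - x.2) ≤ 1 := by
  rw [tsum_step x fun y => φ (y.2 - x.2)]
  refine ENNReal.div_le_of_le_mul ?_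
  rw [one_mul, Fintype.sum_prod_type]
  have : ∀ i : Fin (d + 1), ∑ b : Bool,
      φ ((x + projE d N (Pi.single i (if b then (1 : ℤ) else -1))).2 - x.2) ≤ 2 := by
    intro i
    rw [Fintype.sum_bool]
    simp only [projE, Prod.snd_add, add_sub_cancel_left]
    by_cases hi : i = Fin.last d
    · subst hi
      simpa using h1
    · rw [Pi.single_eq_of_ne (Ne.symm hi), Pi.single_eq_of_ne (Ne.symm hi)]
      calc φ 0 + φ 0 ≤ 1 + 1 := by gcongr
        _ = 2 := by norm_num
  refine (Finset.sum_le_sum fun i _ => this i).trans ?_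
  simp
  ring_nf
  exact le_rfl

theorem tsum_step_zero {d N : ℕ} (x : Cyl d N) (φ : ℤ → ℝ≥0∞) (h0 : φ 0 = 0)
    (h1 : φ 1 = 0) (h2 : φ (-1) = 0) :
    ∑' y, stepProb d N x y * φ (y.2 - x.2) ≤ 0 := by
  rw [tsum_step x fun y => φ (y.2 - x.2)]
  refine ENNReal.div_le_of_le_mul ?_
  rw [zero_mul]
  refine le_of_eq (Finset.sum_eq_zero ?_)
  rintro ⟨i, b⟩ -
  simp only [projE, Prod.snd_add, add_sub_cancel_left]
  by_cases hi : i = Fin.last d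
  · subst hi
    cases b <;> simp [h1, h2]
  · rw [Pi.single_eq_of_ne (Ne.symm hi), h0]

theorem nn_ae {d N : ℕ} {Pl : Cyl d N → Measure (ℕ → Cyl d N)}
    (hP : IsCylRW d N Pl) (x : Cyl d N) :
    Pl x {ω | ∃ k, 1 < |xi ω k|} = 0 := by
  have : {ω : ℕ → Cyl d N | ∃ k, 1 < |xi ω k|} = ⋃ k, {ω | 1 < |xi ω k|} := by
    ext; simp
  rw [this, measure_iUnion_null_iff]
  intro k
  have h := lintegral_step (n := k) hP x (F := fun _ => 1)
    (G := fun ω y => if 1 < |y.2 - (ω k).2| then 1 else 0) (fun _ _ _ => rfl)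
    (fun y ω ω' hω => by simp only [hω k le_rfl]) 0
    (fun ω => tsum_step_zero (ω k) (fun z => if 1 < |z| then 1 else 0)
      (by simp) (by simp) (by simp))
  simp only [one_mul, zero_mul, nonpos_iff_eq_zero] at h
  have hm : MeasurableSet {ω : ℕ → Cyl d N | 1 < |xi ω k|} := by
    have : Measurable fun ω : ℕ → Cyl d N => ((ω (k + 1)), (ω k)) :=
      (measurable_pi_apply _).prodMk (measurable_pi_apply _)
    exact this (t := {p | 1 < |p.1.2 - p.2.2|}) (Set.to_countable _).measurableSet
  rw [← lintegral_indicator_one hm, ← h]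
  refine lintegral_congr fun ω => ?_
  simp [Set.indicator_apply, xi]

/-- Martingale transform. -/
def Mg {d N : ℕ} (h : ℕ → (ℕ → Cyl d N) → ℤ) (ω : ℕ → Cyl d N) (n : ℕ) : ℤ :=
  ∑ k ∈ Finset.range n, h k ω * xi ω k

/-- Its square bracket. -/
def Qg {d N : ℕ} (h : ℕ → (ℕ → Cyl d N) → ℤ) (ω : ℕ → Cyl d N) (n : ℕ) : ℤ :=
  ∑ k ∈ Finset.range n, h k ω ^ 2 * xi ω k ^ 2

theorem xi_adp {d N : ℕ} {k n : ℕ} (h : k < n) : Adp n fun ω : ℕ → Cyl d N => xi ω k := by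
  intro ω ω' hω
  simp only [xi]
  rw [hω k (by omega), hω (k + 1) (by omega)]

theorem Adp.mono {X β : Type*} {m n : ℕ} (hmn : m ≤ n) {F : (ℕ → X) → β} (h : Adp m F) :
    Adp n F := fun ω ω' hω => h ω ω' fun i hi => hω i (hi.trans hmn)

theorem Mg_adp {d N : ℕ} {h : ℕ → (ℕ → Cyl d N) → ℤ} (hA : ∀ k, Adp k (h k)) (n : ℕ) :
    Adp n fun ω => Mg h ω n := by
  intro ω ω' hω
  refine Finset.sum_congr rfl fun k hk => ?_
  rw [Finset.mem_range] at hk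
  rw [(hA k).mono hk.le ω ω' hω, show xi ω k = xi ω' k from xi_adp hk ω ω' hω]

theorem Qg_adp {d N : ℕ} {h : ℕ → (ℕ → Cyl d N) → ℤ} (hA : ∀ k, Adp k (h k)) (n : ℕ) :
    Adp n fun ω => Qg h ω n := by
  intro ω ω' hω
  refine Finset.sum_congr rfl fun k hk => ?_
  rw [Finset.mem_range] at hk
  rw [(hA k).mono hk.le ω ω' hω, show xi ω k = xi ω' k from xi_adp hk ω ω' hω]

theorem exp_two (a : ℝ) : Real.exp (a - a ^ 2 / 2) + Real.exp (-a - a ^ 2 / 2) ≤ 2 := by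
  have h := Real.cosh_le_exp_half_sq a
  rw [Real.cosh_eq] at h
  rw [sub_eq_add_neg, sub_eq_add_neg, Real.exp_add, Real.exp_add, Real.exp_neg (a ^ 2 / 2)]
  have hp := Real.exp_pos (a ^ 2 / 2)
  rw [← add_mul, ← div_eq_mul_inv, div_le_iff₀ hp]
  linarith

theorem exp_supermart {d N : ℕ} {Pl : Cyl d N → Measure (ℕ → Cyl d N)}
    (hP : IsCylRW d N Pl) (x : Cyl d N) {h : ℕ → (ℕ → Cyl d N) → ℤ} (hA : ∀ k, Adp k (h k))
    (θ : ℝ) (n : ℕ) :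
    ∫⁻ ω, ENNReal.ofReal (Real.exp (θ * Mg h ω n - θ ^ 2 / 2 * Qg h ω n)) ∂(Pl x) ≤ 1 := by
  induction n with
  | zero =>
    have := hP.1 x
    simp [Mg, Qg]
  | succ n ih =>
    refine le_trans ?_ ih
    have hs := lintegral_step (n := n) hP x
      (F := fun ω => ENNReal.ofReal (Real.exp (θ * Mg h ω n - θ ^ 2 / 2 * Qg h ω n)))
      (G := fun ω y => ENNReal.ofReal (Real.exp (θ * h n ω * ((y.2 - (ω n).2 : ℤ) : ℝ) -
        (θ * h n ω * ((y.2 - (ω n).2 : ℤ) : ℝ)) ^ 2 / 2)))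
      (fun ω ω' hω => by
        have h1 := Mg_adp hA n ω ω' hω
        have h2 := Qg_adp hA n ω ω' hω
        simp only at h1 h2
        simp only [h1, h2])
      (fun y ω ω' hω => by
        simp only [hω n le_rfl, hA n ω ω' hω]) 1
      (fun ω => tsum_step_le (ω n)
        (fun z => ENNReal.ofReal (Real.exp (θ * h n ω * (z : ℝ) -
          (θ * h n ω * (z : ℝ)) ^ 2 / 2))) (by simp)
        (by
          rw [← ENNReal.ofReal_add (Real.exp_pos _).le (Real.exp_pos _).le]
          have := exp_two (θ * h n ω)
          refine ENNReal.ofReal_le_of_le_toReal ?_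
          simp
          convert this using 3 ))
    rw [one_mul] at hs
    refine le_trans (le_of_eq ?_) hs
    refine lintegral_congr fun ω => ?_
    rw [← ENNReal.ofReal_mul (Real.exp_pos _).le, ← Real.exp_add]
    congr 2
    simp only [Mg, Qg, Finset.sum_range_succ, xi]
    push_cast
    ring

/-- Freedman-type maximal inequality. -/
theorem freedman {d N : ℕ} {Pl : Cyl d N → Measure (ℕ → Cyl d N)}
    (hP : IsCylRW d N Pl) (x : Cyl d N) {h : ℕ → (ℕ → Cyl d N) → ℤ} (hA : ∀ k, Adp k (h k))
    (T : ℕ) (lam v : ℝ) (hl : 0 < lam) (hv : 0 < v) :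
    Pl x {ω | ∃ n ≤ T, lam ≤ Mg h ω n ∧ (Qg h ω n : ℝ) ≤ v} ≤
      ENNReal.ofReal (Real.exp (-(lam ^ 2 / (2 * v)))) := by
  set bad : (ℕ → Cyl d N) → ℕ → Prop := fun ω n => lam ≤ Mg h ω n ∧ (Qg h ω n : ℝ) ≤ v
    with hbad
  set h' : ℕ → (ℕ → Cyl d N) → ℤ := fun k ω => if ∀ i ≤ k, ¬ bad ω i then h k ω else 0
    with hh'
  have hA' : ∀ k, Adp k (h' k) := by
    intro k ω ω' hω
    have : (∀ i ≤ k, ¬ bad ω i) ↔ (∀ i ≤ k, ¬ bad ω' i) := by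
      refine forall₂_congr fun i hi => ?_
      have h1 := (Mg_adp hA i).mono hi ω ω' hω
      have h2 := (Qg_adp hA i).mono hi ω ω' hω
      simp only [hbad, h1, h2]
    simp only [hh', this, hA k ω ω' hω]
  set θ := lam / v with hθ
  have hθ0 : 0 < θ := div_pos hl hv
  set c := ENNReal.ofReal (Real.exp (lam ^ 2 / (2 * v))) with hc
  have hm : Adp T fun ω =>
      ENNReal.ofReal (Real.exp (θ * Mg h' ω T - θ ^ 2 / 2 * Qg h' ω T)) := by
    intro ω ω' hω
    have h1 := Mg_adp hA' T ω ω' hω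
    have h2 := Qg_adp hA' T ω ω' hω
    simp only at h1 h2
    simp only [h1, h2]
  have hmk := mul_meas_ge_le_lintegral (μ := Pl x) hm.measurable c
  have hE := exp_supermart hP x hA' θ T
  have hsub : {ω | ∃ n ≤ T, lam ≤ Mg h ω n ∧ (Qg h ω n : ℝ) ≤ v} ⊆
      {ω | c ≤ ENNReal.ofReal (Real.exp (θ * Mg h' ω T - θ ^ 2 / 2 * Qg h' ω T))} := by
    rintro ω ⟨n, hn, hb⟩
    have hex : ∃ n, bad ω n := ⟨n, hb⟩
    set τ := Nat.find hex with hτ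
    have hτb : bad ω τ := Nat.find_spec hex
    have hτT : τ ≤ T := (Nat.find_min' hex hb).trans hn
    have hk1 : ∀ k < τ, h' k ω = h k ω := by
      intro k hk
      simp only [hh']
      rw [if_pos]
      intro i hi
      exact Nat.find_min hex (by omega)
    have hk2 : ∀ k, τ ≤ k → h' k ω = 0 := by
      intro k hk
      simp only [hh']
      rw [if_neg]
      push Not
      exact ⟨τ, hk, hτb⟩
    have hM : Mg h' ω T = Mg h ω τ := by
      unfold Mg
      rw [← Finset.sum_range_add_sum_Ico _ hτT, Finset.sum_eq_zero (s := Finset.Ico τ T),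
        add_zero]
      · exact Finset.sum_congr rfl fun k hk => by rw [hk1 k (Finset.mem_range.1 hk)]
      · intro k hk
        rw [hk2 k (Finset.mem_Ico.1 hk).1, zero_mul]
    have hQ : Qg h' ω T = Qg h ω τ := by
      unfold Qg
      rw [← Finset.sum_range_add_sum_Ico _ hτT, Finset.sum_eq_zero (s := Finset.Ico τ T),
        add_zero]
      · exact Finset.sum_congr rfl fun k hk => by rw [hk1 k (Finset.mem_range.1 hk)]
      · intro k hk
        rw [hk2 k (Finset.mem_Ico.1 hk).1]
        ring
    simp only [Set.mem_ofPred_eq, hM, hQ, hc]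
    refine ENNReal.ofReal_le_ofReal (Real.exp_le_exp.2 ?_)
    obtain ⟨h1, h2⟩ := hτb
    have : lam ^ 2 / (2 * v) = θ * lam - θ ^ 2 / 2 * v := by
      rw [hθ]; field_simp; ring
    rw [this]
    have h3 : θ * lam ≤ θ * Mg h ω τ := by gcongr
    have h4 : θ ^ 2 / 2 * Qg h ω τ ≤ θ ^ 2 / 2 * v := by gcongr
    linarith
  have h5 : c * Pl x {ω | ∃ n ≤ T, lam ≤ Mg h ω n ∧ (Qg h ω n : ℝ) ≤ v} ≤ 1 :=
    le_trans (by gcongr) (hmk.trans hE)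
  rw [Real.exp_neg, ENNReal.ofReal_inv_of_pos (Real.exp_pos _), ← hc]
  rw [ENNReal.le_inv_iff_mul_le, mul_comm]
  exact h5

/-- Local time (number of non-lazy departures) of the vertical component. -/
def lt {d N : ℕ} (ω : ℕ → Cyl d N) (n : ℕ) (z : ℤ) : ℤ :=
  ∑ k ∈ Finset.range n, if (ω k).2 = z then xi ω k ^ 2 else 0

/-- Sign integrand. -/
def sg {d N : ℕ} (z : ℤ) (k : ℕ) (ω : ℕ → Cyl d N) : ℤ := Int.sign ((ω k).2 - z)

theorem abs_step (s z x : ℤ) (hx : |x| ≤ 1) :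
    |s + x - z| - |s - z| = Int.sign (s - z) * x + if s = z then x ^ 2 else 0 := by
  have hx' := abs_le.1 hx
  have hc : x = -1 ∨ x = 0 ∨ x = 1 := by omega
  rcases lt_trichotomy (s - z) 0 with h | h | h
  · rw [Int.sign_eq_neg_one_of_neg h, if_neg (by omega), abs_of_neg h, abs_of_nonpos (by omega)]
    ring
  · have : s = z := by omega
    subst this
    rcases hc with rfl | rfl | rfl <;> simp
  · rw [Int.sign_eq_one_of_pos h, if_neg (by omega), abs_of_pos h, abs_of_nonneg (by omega)]
    ring

theorem tanaka {d N : ℕ} {ω : ℕ → Cyl d N} (hnn : ∀ k, |xi ω k| ≤ 1) (n : ℕ) (z : ℤ) :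
    lt ω n z = |(ω n).2 - z| - |(ω 0).2 - z| - Mg (sg z) ω n := by
  induction n with
  | zero => simp [lt, Mg]
  | succ n ih =>
    have h := abs_step (ω n).2 z (xi ω n) (hnn n)
    have h2 : (ω n).2 + xi ω n = (ω (n + 1)).2 := by simp [xi]
    rw [h2] at h
    simp only [lt, Mg, sg, Finset.sum_range_succ] at ih ⊢
    linarith

theorem lt_succ_le {d N : ℕ} {ω : ℕ → Cyl d N} (hnn : ∀ k, |xi ω k| ≤ 1) (n : ℕ) (z : ℤ) :
    lt ω (n + 1) z ≤ lt ω n z + 1 := by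
  simp only [lt, Finset.sum_range_succ]
  have : xi ω n ^ 2 ≤ 1 := by
    rw [← sq_abs]
    exact pow_le_one₀ (abs_nonneg _) (hnn n)
  split_ifs <;> linarith

theorem lt_nonneg {d N : ℕ} (ω : ℕ → Cyl d N) (n : ℕ) (z : ℤ) : 0 ≤ lt ω n z := by
  refine Finset.sum_nonneg fun k _ => ?_
  split_ifs <;> positivity

theorem Qg_le {d N : ℕ} {ω : ℕ → Cyl d N} {h : ℕ → (ℕ → Cyl d N) → ℤ} (C a b B : ℤ) (n : ℕ)
    (hC : 0 ≤ C) (hab : a ≤ b + 1)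
    (hh : ∀ k, h k ω ^ 2 ≤ if a ≤ (ω k).2 ∧ (ω k).2 ≤ b then C else 0)
    (hB : ∀ z, lt ω n z ≤ B) : Qg h ω n ≤ C * ((b + 1 - a) * B) := by
  have h1 : Qg h ω n ≤ ∑ k ∈ Finset.range n, C * ∑ z ∈ Finset.Icc a b,
      (if (ω k).2 = z then xi ω k ^ 2 else 0) := by
    refine Finset.sum_le_sum fun k _ => ?_
    rw [Finset.sum_ite_eq]
    have h2 := hh k
    simp only [Finset.mem_Icc]
    split_ifs at h2 ⊢ with h3
    · gcongr
    · have h4 : h k ω ^ 2 = 0 := le_antisymm h2 (sq_nonneg _)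
      rw [h4]; simp
  refine h1.trans ?_
  rw [← Finset.mul_sum, Finset.sum_comm]
  refine mul_le_mul_of_nonneg_left ?_ hC
  calc ∑ z ∈ Finset.Icc a b, ∑ k ∈ Finset.range n, (if (ω k).2 = z then xi ω k ^ 2 else 0)
      ≤ ∑ z ∈ Finset.Icc a b, B := Finset.sum_le_sum fun z _ => hB z
    _ = (b + 1 - a) * B := by
      rw [Finset.sum_const, nsmul_eq_mul, Int.card_Icc, Int.toNat_of_nonneg (by omega)]

theorem chain (L : ℕ) (f : ℕ → ℝ) (lam : ℕ → ℝ)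
    (h : ∀ m, 1 ≤ m → m ≤ L → ∀ a < 2 ^ m,
      |f (a / 2 * 2 ^ (L - m + 1)) - f (a * 2 ^ (L - m))| ≤ lam m) :
    ∀ m ≤ L, ∀ a < 2 ^ m, |f 0 - f (a * 2 ^ (L - m))| ≤ ∑ i ∈ Finset.range m, lam (i + 1) := by
  intro m
  induction m with
  | zero =>
    intro _ a ha
    have : a = 0 := by simpa using ha
    subst this
    simp
  | succ m ih =>
    intro hm a ha
    have h1 := ih (by omega) (a / 2) (by rw [pow_succ] at ha; omega)
    have h2 := h (m + 1) (by omega) hm a ha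
    have e : L - (m + 1) + 1 = L - m := by omega
    rw [e] at h2
    rw [Finset.sum_range_succ]
    calc |f 0 - f (a * 2 ^ (L - (m + 1)))| = |(f 0 - f (a / 2 * 2 ^ (L - m))) +
          (f (a / 2 * 2 ^ (L - m)) - f (a * 2 ^ (L - (m + 1))))| := by ring_nf
      _ ≤ _ := (abs_add_le _ _).trans (add_le_add h1 h2)

/-- Grid point of the chaining. -/
def gp (L y : ℕ) : ℤ := -2 ^ (L - 1) + (y : ℤ)

/-- Chaining integrand. -/
def hp {d N : ℕ} (L m a : ℕ) (e : ℤ) (k : ℕ) (ω : ℕ → Cyl d N) : ℤ :=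
  e * (sg (gp L (a / 2 * 2 ^ (L - m + 1))) k ω - sg (gp L (a * 2 ^ (L - m))) k ω)

theorem Mg_hp {d N : ℕ} (L m a : ℕ) (e : ℤ) (ω : ℕ → Cyl d N) (n : ℕ) :
    Mg (hp L m a e) ω n = e * (Mg (sg (gp L (a / 2 * 2 ^ (L - m + 1)))) ω n -
      Mg (sg (gp L (a * 2 ^ (L - m)))) ω n) := by
  simp only [Mg, hp, ← Finset.sum_sub_distrib, Finset.mul_sum]
  exact Finset.sum_congr rfl fun k _ => by ring

theorem sign_sub_sq (s x y : ℤ) (hxy : x ≤ y) :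
    (Int.sign (s - x) - Int.sign (s - y)) ^ 2 ≤ if x ≤ s ∧ s ≤ y then 4 else 0 := by
  rcases lt_trichotomy (s - x) 0 with h | h | h <;>
  rcases lt_trichotomy (s - y) 0 with h' | h' | h' <;>
  first
  | omega
  | (first
      | rw [Int.sign_eq_neg_one_of_neg h]
      | rw [h, Int.sign_zero]
      | rw [Int.sign_eq_one_of_pos h]) <;>
    (first
      | rw [Int.sign_eq_neg_one_of_neg h']
      | rw [h', Int.sign_zero]
      | rw [Int.sign_eq_one_of_pos h']) <;>
    split_ifs <;> first | omega | norm_num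

theorem lt_bound {d N : ℕ} {ω : ℕ → Cyl d N} (hnn : ∀ k, |xi ω k| ≤ 1) (L K T : ℕ)
    (hL : 2 ≤ L) (hK : 2 ^ L ≤ K) (h0 : |(ω 0).2| ≤ 2 ^ (L - 2))
    (hE1 : ∀ n ≤ T, |(ω n).2 - (ω 0).2| < 2 ^ (L - 2))
    (hE2 : ∀ m, 1 ≤ m → m ≤ L → ∀ a < 2 ^ m, ∀ e : ℤ, (e = 1 ∨ e = -1) → ∀ n ≤ T,
      ¬ (((K : ℝ) / 12 * (3 / 4) ^ m) ≤ Mg (hp L m a e) ω n ∧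
        (Qg (hp L m a e) ω n : ℝ) ≤ 16 * 2 ^ (L - m) * K)) :
    ∀ n ≤ T, ∀ z, lt ω n z ≤ K := by
  by_contra hcon
  push Not at hcon
  set n := Nat.find hcon with hn
  obtain ⟨hnT, z, hz⟩ := Nat.find_spec hcon
  have hK1 : 1 ≤ K := le_trans Nat.one_le_two_pow hK
  have hn0 : n ≠ 0 := by
    intro h
    rw [← hn, h] at hz
    simp [lt] at hz
    omega
  obtain ⟨n', hn'⟩ := Nat.exists_eq_succ_of_ne_zero hn0
  have hmin : ∀ z, lt ω n' z ≤ K := by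
    intro z
    by_contra hc
    push Not at hc
    exact Nat.find_min hcon (m := n') (by omega) ⟨by omega, z, hc⟩
  have hB : ∀ z, lt ω n z ≤ 2 * K := by
    intro z
    rw [hn']
    have := lt_succ_le hnn n' z
    have := hmin z
    simp only [Nat.succ_eq_add_one]
    omega
  have e1 : (2 : ℤ) ^ L = 4 * 2 ^ (L - 2) := by
    obtain ⟨l, rfl⟩ := Nat.exists_eq_add_of_le hL
    simp [pow_add]
  have e2 : (2 : ℤ) ^ (L - 1) = 2 * 2 ^ (L - 2) := by
    obtain ⟨l, rfl⟩ := Nat.exists_eq_add_of_le hL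
    have : 2 + l - 1 = l + 1 := by omega
    rw [this, pow_succ]
    simp
    ring
  have hR : (1 : ℤ) ≤ 2 ^ (L - 2) := one_le_pow₀ (by norm_num)
  set R : ℤ := 2 ^ (L - 2) with hRdef
  have hrange : ∀ k ≤ T, -(2 * R) < (ω k).2 ∧ (ω k).2 < 2 * R := by
    intro k hk
    have h1 := abs_lt.1 (hE1 k hk)
    have h2 := abs_le.1 h0
    constructor <;> linarith [h1.1, h1.2, h2.1, h2.2]
  -- the range of z
  have hzr : -(2 * R) < z ∧ z < 2 * R := by
    by_contra hc
    have : lt ω n z = 0 := by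
      refine Finset.sum_eq_zero fun k hk => ?_
      rw [Finset.mem_range] at hk
      rw [if_neg]
      intro h
      exact hc (h ▸ hrange k (by omega))
    rw [← hn, this] at hz
    omega
  set f : ℕ → ℝ := fun y => (Mg (sg (gp L y)) ω n : ℝ) with hf
  have hch := chain L f (fun m => (K : ℝ) / 12 * (3 / 4) ^ m) (by
    intro m hm hmL a ha
    have hQ : ∀ e : ℤ, (e = 1 ∨ e = -1) →
        (Qg (hp L m a e) ω n : ℝ) ≤ 16 * 2 ^ (L - m) * K := by
      intro e he
      have hal : a / 2 * 2 ^ (L - m + 1) ≤ a * 2 ^ (L - m) := by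
        rw [pow_succ]
        have : a / 2 * 2 ≤ a := Nat.div_mul_le_self a 2
        calc a / 2 * (2 ^ (L - m) * 2) = (a / 2 * 2) * 2 ^ (L - m) := by ring
          _ ≤ _ := by gcongr
      have hau : a * 2 ^ (L - m) ≤ a / 2 * 2 ^ (L - m + 1) + 2 ^ (L - m) := by
        rw [pow_succ]
        have : a ≤ a / 2 * 2 + 1 := by omega
        calc a * 2 ^ (L - m) ≤ (a / 2 * 2 + 1) * 2 ^ (L - m) := by gcongr
          _ = _ := by ring
      have hle : gp L (a / 2 * 2 ^ (L - m + 1)) ≤ gp L (a * 2 ^ (L - m)) := by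
        unfold gp
        have : ((a / 2 * 2 ^ (L - m + 1) : ℕ) : ℤ) ≤ ((a * 2 ^ (L - m) : ℕ) : ℤ) := by
          exact_mod_cast hal
        linarith
      have hup : gp L (a * 2 ^ (L - m)) + 1 - gp L (a / 2 * 2 ^ (L - m + 1)) ≤
          2 * 2 ^ (L - m) := by
        unfold gp
        have : ((a * 2 ^ (L - m) : ℕ) : ℤ) ≤
            ((a / 2 * 2 ^ (L - m + 1) + 2 ^ (L - m) : ℕ) : ℤ) := by
          exact_mod_cast hau
        have h1 : (1 : ℤ) ≤ 2 ^ (L - m) := one_le_pow₀ (by norm_num)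
        rw [Nat.cast_add, Nat.cast_pow (2 : ℕ) (L - m), Nat.cast_ofNat] at this
        linarith
      have hq := Qg_le (ω := ω) (h := hp L m a e) 4 (gp L (a / 2 * 2 ^ (L - m + 1)))
        (gp L (a * 2 ^ (L - m))) (2 * K) n (by norm_num) (by linarith) (by
          intro k
          have h1 : e ^ 2 = 1 := by rcases he with rfl | rfl <;> norm_num
          unfold hp sg
          rw [mul_pow, h1, one_mul]
          exact sign_sub_sq _ _ _ hle) hB
      have hq2 : Qg (hp L m a e) ω n ≤ 16 * 2 ^ (L - m) * K := by
        refine hq.trans ?_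
        have : (gp L (a * 2 ^ (L - m)) + 1 - gp L (a / 2 * 2 ^ (L - m + 1))) * (2 * (K : ℤ)) ≤
            2 * 2 ^ (L - m) * (2 * K) := by gcongr
        linarith
      exact_mod_cast hq2
    have hp1 := hE2 m hm hmL a ha 1 (Or.inl rfl) n hnT
    have hp2 := hE2 m hm hmL a ha (-1) (Or.inr rfl) n hnT
    have q1 : ¬ _ := fun h => hp1 ⟨h, hQ 1 (Or.inl rfl)⟩
    have q2 : ¬ _ := fun h => hp2 ⟨h, hQ (-1) (Or.inr rfl)⟩
    rw [Mg_hp] at q1 q2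
    push_cast at q1 q2
    rw [abs_le]
    simp only [hf]
    constructor <;> linarith)
  -- y index
  have hy0 : 0 ≤ z + 2 * R := by omega
  set y := (z + 2 * R).toNat with hy
  have hyz : (y : ℤ) = z + 2 * R := Int.toNat_of_nonneg hy0
  have hyL : y < 2 ^ L := by
    have : (y : ℤ) < 2 ^ L := by rw [hyz, e1]; omega
    exact_mod_cast this
  have hc := hch L le_rfl y hyL
  rw [Nat.sub_self, pow_zero, mul_one] at hc
  have hgz : gp L y = z := by unfold gp; rw [hyz, e2]; ring
  have hroot : Mg (sg (gp L 0)) ω n = (ω n).2 - (ω 0).2 := by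
    have : ∀ k ∈ Finset.range n, sg (gp L 0) k ω * xi ω k = (ω (k + 1)).2 - (ω k).2 := by
      intro k hk
      rw [Finset.mem_range] at hk
      have h1 := (hrange k (by omega)).1
      unfold sg gp
      rw [Int.sign_eq_one_of_pos (by rw [e2]; push_cast; omega), one_mul, xi]
    unfold Mg
    rw [Finset.sum_congr rfl this, Finset.sum_range_sub (fun k => (ω k).2)]
  have hsum : ∑ i ∈ Finset.range L, (K : ℝ) / 12 * (3 / 4) ^ (i + 1) ≤ K / 4 := by
    have : ∑ i ∈ Finset.range L, (K : ℝ) / 12 * (3 / 4) ^ (i + 1) =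
        K / 4 * (1 - (3 / 4) ^ L) := by
      simp_rw [pow_succ]
      rw [← Finset.mul_sum, ← Finset.sum_mul, geom_sum_eq (by norm_num)]
      ring
    rw [this]
    have h3 : (0 : ℝ) ≤ (3 / 4) ^ L := by positivity
    have h4 : (0 : ℝ) ≤ K := by positivity
    nlinarith
  have hc2 := hc.trans hsum
  simp only [hf] at hc2
  rw [hgz, hroot] at hc2
  have htan := tanaka hnn n z
  have habs : |(ω n).2 - z| - |(ω 0).2 - z| ≤ |(ω n).2 - (ω 0).2| := by
    have := abs_sub_abs_le_abs_sub ((ω n).2 - z) ((ω 0).2 - z)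
    simpa using this
  have hlt := hE1 n hnT
  have hz' : (K : ℤ) < lt ω n z := hz
  have hs2 := abs_lt.1 hlt
  have f1 : (K : ℝ) < |((ω n).2 : ℝ) - (ω 0).2| - Mg (sg z) ω n := by
    have : (K : ℤ) < |(ω n).2 - (ω 0).2| - Mg (sg z) ω n := by linarith
    exact_mod_cast this
  have f2 : |((ω n).2 : ℝ) - (ω 0).2| < (R : ℝ) := by exact_mod_cast hlt
  have f3 : -(R : ℝ) < ((ω n).2 : ℝ) - (ω 0).2 := by exact_mod_cast hs2.1
  have f4 : 4 * (R : ℝ) ≤ K := by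
    have : 4 * R ≤ K := by rw [← e1]; exact_mod_cast hK
    exact_mod_cast this
  have f5 := (abs_le.1 hc2).2
  push_cast at f5
  linarith

theorem entT_eq {X : Type*} {U : Set X} {ω : ℕ → X} {n : ℕ} (h : entT U ω = n) :
    ω n ∈ U ∧ ∀ m < n, ω m ∉ U := by
  unfold entT at h
  set S : Set ℕ∞ := {t : ℕ∞ | ∃ n : ℕ, ω n ∈ U ∧ t = n} with hS
  have hne : S.Nonempty := by
    by_contra hc
    rw [Set.not_nonempty_iff_eq_empty] at hc
    rw [hc, sInf_empty] at h
    exact ENat.natCast_ne_top n h.symm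
  have hm := csInf_mem hne
  rw [h] at hm
  obtain ⟨n', hn', e⟩ := hm
  rw [Nat.cast_inj] at e
  subst e
  refine ⟨hn', fun m hm hmU => ?_⟩
  have : sInf S ≤ m := sInf_le ⟨m, hmU, rfl⟩
  rw [h] at this
  have : n ≤ m := by exact_mod_cast this
  omega

theorem after_eq {X : Type*} {t : ℕ∞} {f : (ℕ → X) → ℕ∞} {ω : ℕ → X} {n : ℕ}
    (h : after t f ω = n) :
    ∃ m r : ℕ, t = m ∧ f (fun k => ω (k + m)) = r ∧ n = m + r := by
  induction t using ENat.recTopCoe with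
  | top => simp [after] at h
  | coe m =>
    simp only [after, ENat.recTopCoe_natCast] at h
    have hf : f (fun k => ω (k + m)) ≠ ⊤ := by
      intro hc
      rw [hc] at h
      simp at h
    obtain ⟨r, hr⟩ := ENat.ne_top_iff_exists.1 hf
    refine ⟨m, r, rfl, hr.symm, ?_⟩
    rw [← hr] at h
    exact_mod_cast h.symm

/-- The walk is inside an excursion at time `k`. -/
def inn (d N : ℕ) (j : ℤ) (k : ℕ) (ω : ℕ → Cyl d N) : Prop :=
  ∃ i ≤ k, ω i ∈ Bblk d N j ∧ ∀ l, i ≤ l → l ≤ k → ω l ∈ Btl d N j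

theorem DD_inc {d N : ℕ} (j : ℤ) (ω : ℕ → Cyl d N) (k : ℕ) : ∀ n : ℕ,
    DD d N j k ω = n → (n = 0 ∨ ω n ∉ Btl d N j) ∧
      (k * N : ℤ) ≤ ∑ m ∈ Finset.range n, if inn d N j m ω then
        (|(ω (m + 1)).2 - j * N| - |(ω m).2 - j * N|) else 0 := by
  induction k with
  | zero =>
    intro n hn
    have : n = 0 := by
      simp only [DD] at hn
      exact_mod_cast hn.symm
    subst this
    simp
  | succ k ih =>
    intro n hn
    simp only [DD] at hn
    obtain ⟨n0, r, h1, h2, h3⟩ := after_eq hn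
    obtain ⟨hb, hsum⟩ := ih n0 h1
    unfold oneExc at h2
    obtain ⟨a, b, h4, h5, h6⟩ := after_eq h2
    obtain ⟨h7, h8⟩ := entT_eq h4
    unfold exitT at h5
    obtain ⟨h9, h10⟩ := entT_eq h5
    have hn' : n = n0 + a + b := by omega
    have g7 : ω (n0 + a) ∈ Bblk d N j := by rw [add_comm]; exact h7
    have g8 : ∀ m, n0 ≤ m → m < n0 + a → ω m ∉ Bblk d N j := by
      intro m hm hm2
      have := h8 (m - n0) (by omega)
      rwa [Nat.sub_add_cancel hm] at this
    have g9 : ω n ∉ Btl d N j := by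
      have : b + a + n0 = n := by omega
      rw [← this]; exact h9
    have g10 : ∀ m, n0 + a ≤ m → m < n → ω m ∈ Btl d N j := by
      intro m hm hm2
      have := h10 (m - (n0 + a)) (by omega)
      have e : m - (n0 + a) + a + n0 = m := by omega
      simp only [Set.mem_compl_iff, not_not, e] at this
      exact this
    refine ⟨Or.inr g9, ?_⟩
    rw [← Finset.sum_range_add_sum_Ico _ (show n0 ≤ n by omega),
      ← Finset.sum_Ico_consecutive _ (show n0 ≤ n0 + a by omega) (show n0 + a ≤ n by omega)]
    have s1 : ∑ m ∈ Finset.Ico n0 (n0 + a), (if inn d N j m ω then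
        (|(ω (m + 1)).2 - j * N| - |(ω m).2 - j * N|) else 0) = 0 := by
      refine Finset.sum_eq_zero fun m hm => ?_
      rw [Finset.mem_Ico] at hm
      rw [if_neg]
      rintro ⟨i, hi, hiB, hil⟩
      by_cases hin : n0 ≤ i
      · exact g8 i hin (by omega) hiB
      · rcases hb with hb | hb
        · omega
        · exact hb (hil n0 (by omega) (by omega))
    have s2 : ∑ m ∈ Finset.Ico (n0 + a) n, (if inn d N j m ω then
        (|(ω (m + 1)).2 - j * N| - |(ω m).2 - j * N|) else 0) =
        |(ω n).2 - j * N| - |(ω (n0 + a)).2 - j * N| := by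
      rw [← Finset.sum_Ico_sub (fun m => |(ω m).2 - j * N|) (show n0 + a ≤ n by omega)]
      refine Finset.sum_congr rfl fun m hm => ?_
      rw [Finset.mem_Ico] at hm
      rw [if_pos]
      exact ⟨n0 + a, hm.1, g7, fun l hl hl2 => g10 l hl (by omega)⟩
    rw [s1, s2]
    have t1 : |(ω (n0 + a)).2 - j * N| ≤ N := by
      have : (j - 1) * (N : ℤ) ≤ (ω (n0 + a)).2 ∧ (ω (n0 + a)).2 ≤ (j + 1) * (N : ℤ) := g7
      rw [abs_le]
      constructor <;> linarith [this.1, this.2]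
    have t2 : 2 * (N : ℤ) ≤ |(ω n).2 - j * N| := by
      have : ¬ ((j - 2) * (N : ℤ) + 1 ≤ (ω n).2 ∧ (ω n).2 ≤ (j + 2) * (N : ℤ) - 1) := g9
      rw [le_abs]
      by_contra hc
      push Not at hc
      apply this
      have e1 : (j - 2) * (N : ℤ) = j * N - 2 * N := by ring
      have e2 : (j + 2) * (N : ℤ) = j * N + 2 * N := by ring
      rw [e1, e2]
      constructor <;> omega
    push_cast
    linarith

/-- Excursion integrand. -/
noncomputable def hin (d N : ℕ) (j : ℤ) (k : ℕ) (ω : ℕ → Cyl d N) : ℤ :=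
  if inn d N j k ω then sg (j * N) k ω else 0

theorem DD_bound {d N : ℕ} (hN : 1 ≤ N) {ω : ℕ → Cyl d N} (hnn : ∀ k, |xi ω k| ≤ 1) (j : ℤ)
    (K T k : ℕ) (hk : 2 * K ≤ k * N) (hlt : ∀ n ≤ T, ∀ z, lt ω n z ≤ K)
    (n : ℕ) (hn : n ≤ T) (hD : DD d N j k ω = n) :
    (K : ℝ) ≤ Mg (hin d N j) ω n ∧ (Qg (hin d N j) ω n : ℝ) ≤ 4 * N * K := by
  have h1 := (DD_inc j ω k n hD).2
  have hself : ∀ m, (ω m).2 = j * N → inn d N j m ω := by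
    intro m hm
    have hN' : (1 : ℤ) ≤ N := by exact_mod_cast hN
    refine ⟨m, le_rfl, ?_, ?_⟩
    · show (j - 1) * (N : ℤ) ≤ (ω m).2 ∧ (ω m).2 ≤ (j + 1) * (N : ℤ)
      constructor <;> linarith
    · intro l hl hl2
      have : l = m := by omega
      subst this
      show (j - 2) * (N : ℤ) + 1 ≤ (ω l).2 ∧ (ω l).2 ≤ (j + 2) * (N : ℤ) - 1
      constructor <;> linarith
  have h2 : ∑ m ∈ Finset.range n, (if inn d N j m ω then
        (|(ω (m + 1)).2 - j * N| - |(ω m).2 - j * N|) else 0) =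
      Mg (hin d N j) ω n + lt ω n (j * N) := by
    unfold Mg lt
    rw [← Finset.sum_add_distrib]
    refine Finset.sum_congr rfl fun m _ => ?_
    have h := abs_step (ω m).2 (j * N) (xi ω m) (hnn m)
    have e : (ω m).2 + xi ω m = (ω (m + 1)).2 := by simp [xi]
    rw [e] at h
    unfold hin sg
    by_cases hi : inn d N j m ω
    · rw [if_pos hi, if_pos hi, h]
    · rw [if_neg hi, if_neg hi, if_neg (fun hc => hi (hself m hc))]
      ring
  have h3 := hlt n hn (j * N)
  rw [h2] at h1
  constructor
  · have h4 : (2 * K : ℤ) ≤ k * N := by exact_mod_cast hk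
    have h5 : (K : ℤ) ≤ Mg (hin d N j) ω n := by linarith
    exact_mod_cast h5
  · have hq := Qg_le (ω := ω) (h := hin d N j) 1 ((j - 2) * (N : ℤ) + 1)
      ((j + 2) * (N : ℤ) - 1) K n (by norm_num) (by nlinarith) (by
        intro m
        unfold hin
        split_ifs with ha hb hb
        · unfold sg
          rcases Int.sign_trichotomy ((ω m).2 - j * N) with h | h | h <;> rw [h] <;> norm_num
        · exfalso
          obtain ⟨i, hi, -, hil⟩ := ha
          exact hb (hil m hi le_rfl)
        · norm_num
        · norm_num) (hlt n hn)
    have : Qg (hin d N j) ω n ≤ 4 * N * K := by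
      have h6 : (0 : ℤ) ≤ K := by positivity
      nlinarith
    exact_mod_cast this

theorem hp_adp {d N : ℕ} (L m a : ℕ) (e : ℤ) (k : ℕ) :
    Adp k (hp (d := d) (N := N) L m a e k) := by
  intro ω ω' hω
  simp only [hp, sg, hω k le_rfl]

theorem hin_adp {d N : ℕ} (j : ℤ) (k : ℕ) : Adp k (hin d N j k) := by
  intro ω ω' hω
  have : inn d N j k ω ↔ inn d N j k ω' := by
    unfold inn
    refine exists_congr fun i => and_congr_right fun hi => ?_
    rw [hω i hi]
    refine and_congr_right fun _ => forall_congr' fun l => forall_congr' fun _ => ?_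
    refine forall_congr' fun hl => ?_
    rw [hω l hl]
  simp only [hin, sg, this, hω k le_rfl]

theorem start_ae {d N : ℕ} {Pl : Cyl d N → Measure (ℕ → Cyl d N)}
    (hP : IsCylRW d N Pl) (x : Cyl d N) : Pl x {ω | ω 0 ≠ x} = 0 := by
  have := hP.1 x
  have h := hP.2 x 0 (fun _ => x)
  simp at h
  have hm : MeasurableSet {ω : ℕ → Cyl d N | ω 0 = x} := by
    have hm0 : Measurable fun ω : ℕ → Cyl d N => ω 0 := measurable_pi_apply 0
    exact hm0 (measurableSet_singleton x)
  have h2 := (prob_compl_eq_zero_iff (μ := Pl x) hm).2 h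
  exact h2

theorem sum_small (L : ℕ) (q : ℝ) (hq0 : 0 ≤ q) (hq : q ≤ 1 / 4) :
    ∑ i ∈ Finset.range L, 2 ^ (i + 1) * (2 * q ^ (i + 1)) ≤ 8 * q := by
  have h1 : ∀ i ∈ Finset.range L, (2 : ℝ) ^ (i + 1) * (2 * q ^ (i + 1)) ≤
      4 * q * (1 / 2) ^ i := by
    intro i _
    have : (2 : ℝ) ^ (i + 1) * (2 * q ^ (i + 1)) = 4 * q * (2 * q) ^ i := by
      rw [mul_pow]; ring
    rw [this]
    gcongr
    linarith
  refine (Finset.sum_le_sum h1).trans ?_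
  rw [← Finset.mul_sum, geom_sum_eq (by norm_num)]
  have h3 : (0 : ℝ) ≤ (1 / 2) ^ L := by positivity
  have h4 : 4 * q * (((1 / 2 : ℝ) ^ L - 1) / (1 / 2 - 1)) = 8 * q - 8 * (q * (1 / 2) ^ L) := by
    ring
  rw [h4]
  have := mul_nonneg hq0 h3
  linarith

theorem E2_prob {d N : ℕ} {Pl : Cyl d N → Measure (ℕ → Cyl d N)}
    (hP : IsCylRW d N Pl) (x : Cyl d N) (L K T : ℕ) (hK : 1 ≤ K)
    (hb : Real.exp (-((K : ℝ) / (4608 * 2 ^ L) / 8)) ≤ 1 / 4) :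
    Pl x {ω | ∃ m, 1 ≤ m ∧ m ≤ L ∧ ∃ a < 2 ^ m, ∃ e : ℤ, (e = 1 ∨ e = -1) ∧ ∃ n ≤ T,
      (((K : ℝ) / 12 * (3 / 4) ^ m) ≤ Mg (hp L m a e) ω n ∧
        (Qg (hp L m a e) ω n : ℝ) ≤ 16 * 2 ^ (L - m) * K)} ≤
      ENNReal.ofReal (8 * Real.exp (-((K : ℝ) / (4608 * 2 ^ L) / 8))) := by
  have hK0 : (0 : ℝ) < K := by exact_mod_cast hK
  set b : ℝ := (K : ℝ) / (4608 * 2 ^ L) with hbdef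
  have hb0 : 0 < b := by positivity
  set q := Real.exp (-(b / 8)) with hq
  let A : ℕ → ℕ → ℤ → Set (ℕ → Cyl d N) := fun m a e => {ω | ∃ n ≤ T,
      (((K : ℝ) / 12 * (3 / 4) ^ m) ≤ Mg (hp L m a e) ω n ∧
        (Qg (hp L m a e) ω n : ℝ) ≤ 16 * 2 ^ (L - m) * K)}
  have hA : ∀ m, m ≤ L → ∀ a e, Pl x (A m a e) ≤ ENNReal.ofReal (q ^ m) := by
    intro m hm a e
    refine (freedman hP x (hp_adp L m a e) T _ _ (by positivity) (by positivity)).trans ?_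
    refine ENNReal.ofReal_le_ofReal ?_
    rw [hq, ← Real.exp_nat_mul]
    refine Real.exp_le_exp.2 ?_
    have e1 : (2 : ℝ) ^ L = 2 ^ (L - m) * 2 ^ m := by rw [← pow_add]; congr 1; omega
    have e2 : ((K : ℝ) / 12 * (3 / 4) ^ m) ^ 2 / (2 * (16 * 2 ^ (L - m) * K)) =
        b * (9 / 8) ^ m := by
      rw [hbdef, e1]
      have h98 : ((9 : ℝ) / 8) ^ m = ((3 / 4) ^ m) ^ 2 * 2 ^ m := by
        rw [← pow_mul, mul_comm m 2, pow_mul, ← mul_pow]; norm_num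
      rw [h98]
      field_simp
      norm_num
    rw [e2]
    have h4 := one_add_mul_le_pow (a := (1 / 8 : ℝ)) (by norm_num) m
    have h5 : (1 : ℝ) + 1 / 8 = 9 / 8 := by norm_num
    rw [h5] at h4
    nlinarith
  calc _ ≤ Pl x (⋃ i ∈ Finset.range L, ⋃ a ∈ Finset.range (2 ^ (i + 1)),
        ⋃ e ∈ ({1, -1} : Finset ℤ), A (i + 1) a e) := by
        refine measure_mono ?_
        rintro ω ⟨m, hm, hmL, a, ha, e, he, h⟩
        simp only [Set.mem_iUnion]
        refine ⟨m - 1, Finset.mem_range.2 (by omega), a, ?_, e, ?_, ?_⟩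
        · rw [Nat.sub_add_cancel hm]; exact Finset.mem_range.2 ha
        · simpa using he
        · rw [Nat.sub_add_cancel hm]; exact h
    _ ≤ ∑ i ∈ Finset.range L, ∑ a ∈ Finset.range (2 ^ (i + 1)),
        ∑ e ∈ ({1, -1} : Finset ℤ), Pl x (A (i + 1) a e) := by
        refine (measure_biUnion_finset_le _ _).trans (Finset.sum_le_sum fun i _ => ?_)
        refine (measure_biUnion_finset_le _ _).trans (Finset.sum_le_sum fun a _ => ?_)
        exact measure_biUnion_finset_le _ _
    _ ≤ ∑ i ∈ Finset.range L, ∑ a ∈ Finset.range (2 ^ (i + 1)),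
        ∑ e ∈ ({1, -1} : Finset ℤ), ENNReal.ofReal (q ^ (i + 1)) := by
        refine Finset.sum_le_sum fun i hi => Finset.sum_le_sum fun a _ =>
          Finset.sum_le_sum fun e _ => hA _ ?_ _ _
        have := Finset.mem_range.1 hi
        omega
    _ = ENNReal.ofReal (∑ i ∈ Finset.range L, 2 ^ (i + 1) * (2 * q ^ (i + 1))) := by
        rw [ENNReal.ofReal_sum_of_nonneg (fun i _ => by positivity)]
        refine Finset.sum_congr rfl fun i _ => ?_
        rw [Finset.sum_const, Finset.sum_const, Finset.card_range,
          ENNReal.ofReal_mul (by positivity), ENNReal.ofReal_mul (by positivity)]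
        have : (({1, -1} : Finset ℤ)).card = 2 := by decide
        rw [this, nsmul_eq_mul, nsmul_eq_mul, ENNReal.ofReal_pow (p := (2 : ℝ)) (by norm_num)]
        simp
    _ ≤ _ := ENNReal.ofReal_le_ofReal (sum_small L q (Real.exp_pos _).le hb)

theorem E1_prob {d N : ℕ} {Pl : Cyl d N → Measure (ℕ → Cyl d N)}
    (hP : IsCylRW d N Pl) (x : Cyl d N) (R T : ℕ) (hR : 1 ≤ R) (hT : 1 ≤ T) :
    Pl x {ω | ∃ e : ℤ, (e = 1 ∨ e = -1) ∧ ∃ n ≤ T,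
      ((R : ℝ) ≤ Mg (fun _ _ => e) ω n ∧ (Qg (fun _ _ => e) ω n : ℝ) ≤ T)} ≤
      ENNReal.ofReal (2 * Real.exp (-((R : ℝ) ^ 2 / (2 * T)))) := by
  have hR0 : (0 : ℝ) < R := by exact_mod_cast hR
  have hT0 : (0 : ℝ) < T := by exact_mod_cast hT
  have hf : ∀ e : ℤ, _ := fun e => freedman hP x (h := fun _ _ => e) (fun k ω ω' _ => rfl)
    T R T hR0 hT0
  refine le_trans (measure_mono ?_) ((measure_union_le _ _).trans
    (add_le_add (hf 1) (hf (-1)))) |>.trans ?_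
  · rintro ω ⟨e, he | he, h⟩
    · left; subst he; exact h
    · right; subst he; exact h
  · rw [← ENNReal.ofReal_add (Real.exp_pos _).le (Real.exp_pos _).le, two_mul (Real.exp _)]

theorem E3_prob {d N : ℕ} {Pl : Cyl d N → Measure (ℕ → Cyl d N)}
    (hP : IsCylRW d N Pl) (x : Cyl d N) (K T J : ℕ) (hK : 1 ≤ K) (hN : 1 ≤ N) :
    Pl x {ω | ∃ j : ℤ, |j| ≤ J ∧ ∃ n ≤ T,
      ((K : ℝ) ≤ Mg (hin d N j) ω n ∧ (Qg (hin d N j) ω n : ℝ) ≤ 4 * N * K)} ≤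
      ENNReal.ofReal ((2 * J + 1) * Real.exp (-((K : ℝ) / (8 * N)))) := by
  have hK0 : (0 : ℝ) < K := by exact_mod_cast hK
  have hN0 : (0 : ℝ) < N := by exact_mod_cast hN
  have hf : ∀ j : ℤ, _ := fun j => freedman hP x (hin_adp j) T K (4 * N * K) hK0
    (by positivity)
  calc _ ≤ Pl x (⋃ j ∈ Finset.Icc (-(J : ℤ)) J, {ω | ∃ n ≤ T,
      ((K : ℝ) ≤ Mg (hin d N j) ω n ∧ (Qg (hin d N j) ω n : ℝ) ≤ 4 * N * K)}) := by
        refine measure_mono ?_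
        rintro ω ⟨j, hj, h⟩
        simp only [Set.mem_iUnion]
        exact ⟨j, Finset.mem_Icc.2 (abs_le.1 hj), h⟩
    _ ≤ ∑ j ∈ Finset.Icc (-(J : ℤ)) J,
        ENNReal.ofReal (Real.exp (-((K : ℝ) ^ 2 / (2 * (4 * N * K))))) :=
        (measure_biUnion_finset_le _ _).trans (Finset.sum_le_sum fun j _ => hf j)
    _ = _ := by
        rw [Finset.sum_const, Int.card_Icc, nsmul_eq_mul, ENNReal.ofReal_mul (by positivity)]
        congr 1
        · have : ((J : ℤ) + 1 - -(J : ℤ)).toNat = 2 * J + 1 := by omega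
          rw [this, ← ENNReal.ofReal_natCast]
          push_cast
          rfl
        · congr 3
          field_simp
          norm_num

theorem bad_prob {d N : ℕ} {Pl : Cyl d N → Measure (ℕ → Cyl d N)}
    (hP : IsCylRW d N Pl) (x : Cyl d N) (hx : x ∈ Bblk d N 0) (L K T J k : ℕ) (hN : 1 ≤ N)
    (hL : 2 ≤ L) (hNL : N ≤ 2 ^ (L - 2)) (hLK : 2 ^ L ≤ K) (hk : 2 * K ≤ k * N) (hT : 1 ≤ T)
    (hb : Real.exp (-((K : ℝ) / (4608 * 2 ^ L) / 8)) ≤ 1 / 4) :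
    Pl x {ω | ∃ j : ℤ, |j| ≤ J ∧ ∃ n ≤ T, DD d N j k ω = (n : ℕ)} ≤
      ENNReal.ofReal (2 * Real.exp (-(((2 : ℝ) ^ (L - 2)) ^ 2 / (2 * T))) +
        8 * Real.exp (-((K : ℝ) / (4608 * 2 ^ L) / 8)) +
        (2 * J + 1) * Real.exp (-((K : ℝ) / (8 * N)))) := by
  have hK1 : 1 ≤ K := le_trans Nat.one_le_two_pow hLK
  have p1 := E1_prob hP x (2 ^ (L - 2)) T Nat.one_le_two_pow hT
  have p2 := E2_prob hP x L K T hK1 hb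
  have p3 := E3_prob hP x K T J hK1 hN
  have p4 := nn_ae hP x
  have p5 := start_ae hP x
  rw [ENNReal.ofReal_add (by positivity) (by positivity),
    ENNReal.ofReal_add (by positivity) (by positivity)]
  push_cast at p1
  refine le_trans ?_ (add_le_add (add_le_add p1 p2) p3)
  refine le_trans ?_ (le_of_eq (add_zero _))
  rw [← p4]
  refine le_trans ?_ (le_of_eq (add_zero _))
  rw [← p5]
  refine le_trans (measure_mono ?_) ((measure_union_le _ _).trans (add_le_add
    ((measure_union_le _ _).trans (add_le_add ((measure_union_le _ _).trans (add_le_add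
      (measure_union_le _ _) le_rfl)) le_rfl)) le_rfl))
  rintro ω ⟨j, hj, n, hn, hD⟩
  by_contra hc
  simp only [Set.mem_union, not_or] at hc
  obtain ⟨⟨⟨⟨c1, c2⟩, c3⟩, c4⟩, c5⟩ := hc
  have hnn : ∀ k, |xi ω k| ≤ 1 := by
    intro k
    by_contra hk
    exact c4 ⟨k, not_le.1 hk⟩
  have h0 : ω 0 = x := by
    by_contra h
    exact c5 h
  have h0' : |(ω 0).2| ≤ 2 ^ (L - 2) := by
    rw [h0]
    have hx' : (0 - 1) * (N : ℤ) ≤ x.2 ∧ x.2 ≤ (0 + 1) * (N : ℤ) := hx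
    have : (N : ℤ) ≤ 2 ^ (L - 2) := by exact_mod_cast hNL
    rw [abs_le]
    constructor <;> linarith [hx'.1, hx'.2]
  have hE1 : ∀ n ≤ T, |(ω n).2 - (ω 0).2| < 2 ^ (L - 2) := by
    intro n hn
    by_contra hcc
    rw [not_lt, le_abs] at hcc
    have hM : ∀ e : ℤ, Mg (fun _ _ => e) ω n = e * ((ω n).2 - (ω 0).2) := by
      intro e
      unfold Mg xi
      rw [← Finset.mul_sum, Finset.sum_range_sub (fun k => (ω k).2)]
    have hQ : ∀ e : ℤ, (e = 1 ∨ e = -1) → (Qg (fun _ _ => e) ω n : ℝ) ≤ T := by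
      intro e he
      have h1 : e ^ 2 = 1 := by rcases he with rfl | rfl <;> norm_num
      have : Qg (fun _ _ => e) ω n ≤ n := by
        unfold Qg
        calc ∑ k ∈ Finset.range n, e ^ 2 * xi ω k ^ 2 ≤ ∑ k ∈ Finset.range n, 1 := by
              refine Finset.sum_le_sum fun k _ => ?_
              rw [h1, one_mul, ← sq_abs]
              exact pow_le_one₀ (abs_nonneg _) (hnn k)
          _ = n := by simp
      have h2 : (Qg (fun _ _ => e) ω n : ℤ) ≤ T := this.trans (by exact_mod_cast hn)
      exact_mod_cast h2
    rcases hcc with h | h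
    · refine c1 ⟨1, Or.inl rfl, n, hn, ?_, hQ 1 (Or.inl rfl)⟩
      rw [hM, one_mul]
      exact_mod_cast h
    · refine c1 ⟨-1, Or.inr rfl, n, hn, ?_, hQ (-1) (Or.inr rfl)⟩
      rw [hM, neg_one_mul]
      exact_mod_cast h
  have hlt := lt_bound hnn L K T hL hLK h0' hE1 (by
    intro m hm hmL a ha e he n hn h
    exact c2 ⟨m, hm, hmL, a, ha, e, he, n, hn, h⟩)
  exact c3 ⟨j, hj, n, hn, DD_bound hN hnn j K T k hk hlt n hn hD⟩

theorem tsum_B {d N : ℕ} (hN : 1 ≤ N) (c : ℝ≥0∞) :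
    ∑' x : Cyl d N, (if x ∈ Bblk d N 0 then c else 0) = (N : ℝ≥0∞) ^ d * (2 * N + 1) * c := by
  haveI : NeZero N := ⟨by omega⟩
  have h1 : ∀ x : Cyl d N, x ∈ Bblk d N 0 ↔
      x ∈ (Finset.univ : Finset (Fin d → ZMod N)) ×ˢ Finset.Icc (-(N : ℤ)) N := by
    intro x
    simp only [Finset.mem_product, Finset.mem_univ, true_and, Finset.mem_Icc]
    show ((0 - 1) * (N : ℤ) ≤ x.2 ∧ x.2 ≤ (0 + 1) * (N : ℤ)) ↔ _
    simp
  rw [tsum_eq_sum (s := (Finset.univ : Finset (Fin d → ZMod N)) ×ˢ Finset.Icc (-(N : ℤ)) N)]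
  · rw [Finset.sum_congr rfl (g := fun _ => c)]
    · rw [Finset.sum_const, Finset.card_product, nsmul_eq_mul, Int.card_Icc]
      have : ((N : ℤ) + 1 - -(N : ℤ)).toNat = 2 * N + 1 := by omega
      rw [this]
      simp
    · intro x hx
      rw [if_pos ((h1 x).2 hx)]
  · intro x hx
    rw [if_neg fun h => hx ((h1 x).1 h)]

theorem lawP_apply {d N : ℕ} (Pl : Cyl d N → Measure (ℕ → Cyl d N)) (A : Set (ℕ → Cyl d N)) :
    lawP d N Pl A = ((N : ℝ≥0∞) ^ d * (2 * N + 1))⁻¹ *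
      ∑' x : Cyl d N, (if x ∈ Bblk d N 0 then Pl x A else 0) := by
  unfold lawP
  rw [Measure.smul_apply, Measure.sum_apply_of_countable, smul_eq_mul]
  congr 2
  funext x
  split_ifs <;> simp

theorem lawP_le {d N : ℕ} (hN : 1 ≤ N) (Pl : Cyl d N → Measure (ℕ → Cyl d N))
    (A : Set (ℕ → Cyl d N)) (c : ℝ≥0∞) (h : ∀ x ∈ Bblk d N 0, Pl x A ≤ c) :
    lawP d N Pl A ≤ c := by
  rw [lawP_apply]
  have h1 : ∑' x : Cyl d N, (if x ∈ Bblk d N 0 then Pl x A else 0) ≤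
      (N : ℝ≥0∞) ^ d * (2 * N + 1) * c := by
    rw [← tsum_B hN]
    refine ENNReal.tsum_le_tsum fun x => ?_
    split_ifs with hx
    · exact h x hx
    · exact le_rfl
  have h0 : (N : ℝ≥0∞) ^ d * (2 * N + 1) ≠ 0 := by
    have : (N : ℝ≥0∞) ≠ 0 := by exact_mod_cast (by omega : N ≠ 0)
    positivity
  have ht : (N : ℝ≥0∞) ^ d * (2 * N + 1) ≠ ⊤ := by
    exact_mod_cast ENNReal.natCast_ne_top (N ^ d * (2 * N + 1))
  calc _ ≤ ((N : ℝ≥0∞) ^ d * (2 * N + 1))⁻¹ * ((N : ℝ≥0∞) ^ d * (2 * N + 1) * c) := by gcongr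
    _ = c := by rw [← mul_assoc, ENNReal.inv_mul_cancel h0 ht, one_mul]

theorem lawP_univ {d N : ℕ} (hN : 1 ≤ N) {Pl : Cyl d N → Measure (ℕ → Cyl d N)}
    (hP : IsCylRW d N Pl) : lawP d N Pl Set.univ = 1 := by
  rw [lawP_apply]
  have h1 : ∑' x : Cyl d N, (if x ∈ Bblk d N 0 then Pl x Set.univ else 0) =
      (N : ℝ≥0∞) ^ d * (2 * N + 1) * 1 := by
    rw [← tsum_B hN]
    refine tsum_congr fun x => ?_
    have := hP.1 x
    simp
  have h0 : (N : ℝ≥0∞) ^ d * (2 * N + 1) ≠ 0 := by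
    have : (N : ℝ≥0∞) ≠ 0 := by exact_mod_cast (by omega : N ≠ 0)
    positivity
  have ht : (N : ℝ≥0∞) ^ d * (2 * N + 1) ≠ ⊤ := by
    exact_mod_cast ENNReal.natCast_ne_top (N ^ d * (2 * N + 1))
  rw [h1, mul_one, ENNReal.inv_mul_cancel h0 ht]

theorem lawP_good {d N : ℕ} (hN : 1 ≤ N) {Pl : Cyl d N → Measure (ℕ → Cyl d N)}
    (hP : IsCylRW d N Pl) (A B : Set (ℕ → Cyl d N)) (hAB : Aᶜ ⊆ B) (c : ℝ) (hc : 0 ≤ c)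
    (h : lawP d N Pl B ≤ ENNReal.ofReal c) :
    1 - c ≤ (lawP d N Pl A).toReal ∧ (lawP d N Pl A).toReal ≤ 1 := by
  have h1 : lawP d N Pl A ≤ 1 := (measure_mono (Set.subset_univ _)).trans_eq (lawP_univ hN hP)
  refine ⟨?_, ENNReal.toReal_le_of_le_ofReal zero_le_one (by simpa using h1)⟩
  have h2 : (1 : ℝ≥0∞) ≤ lawP d N Pl A + ENNReal.ofReal c := by
    rw [← lawP_univ hN hP, ← Set.union_compl_self A]
    refine (measure_union_le _ _).trans ?_
    gcongr
    exact (measure_mono hAB).trans h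
  have hfin : lawP d N Pl A ≠ ⊤ := ne_top_of_le_ne_top ENNReal.one_ne_top h1
  have h3 := ENNReal.toReal_mono (ENNReal.add_ne_top.2 ⟨hfin, ENNReal.ofReal_ne_top⟩) h2
  rw [ENNReal.toReal_add hfin ENNReal.ofReal_ne_top, ENNReal.toReal_ofReal hc,
    ENNReal.toReal_one] at h3
  linarith

theorem err_tendsto (d : ℕ) (c : ℝ) (hc : 0 < c) :
    Tendsto (fun N : ℕ => (4 * (N : ℝ) ^ (2 * d - 1) + 1) * Real.exp (-(c * N))) atTop
      (nhds 0) := by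
  have hlin : Tendsto (fun N : ℕ => c * (N : ℝ)) atTop atTop :=
    tendsto_natCast_atTop_atTop.const_mul_atTop hc
  have h1 := (Real.tendsto_pow_mul_exp_neg_atTop_nhds_zero (2 * d - 1)).comp hlin
  have h2 := (Real.tendsto_pow_mul_exp_neg_atTop_nhds_zero 0).comp hlin
  have h3 := (h1.const_mul (4 / c ^ (2 * d - 1))).add h2
  simp only [mul_zero, add_zero] at h3
  refine h3.congr fun N => ?_
  simp only [Function.comp, mul_pow]
  field_simp

set_option maxHeartbeats 1000000 in
/-- Main estimate for fixed `γ = δ ^ 4`. -/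
theorem main_est (d : ℕ) (hd : 4 ≤ d)
    (Pl : ∀ N : ℕ, Cyl d N → Measure (ℕ → Cyl d N))
    (hPl : ∀ N : ℕ, IsCylRW d N (Pl N)) (u : ℝ) (hu : 0 < u) (δ : ℝ) (hδ : 0 < δ)
    (hδu : δ ≤ u / 4) (hδ4 : Real.exp (-(u / (147456 * δ))) ≤ 1 / 4) :
    ∀ᶠ N : ℕ in atTop,
      1 - (2 * Real.exp (-(1 / (128 * δ ^ 2))) + 8 * Real.exp (-(u / (147456 * δ))) + δ) ≤
        ((lawP d N (Pl N))
            {ω | ∀ j : ℤ, |j| ≤ 2 * (N : ℤ) ^ (2 * d - 1) →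
              gtReal (DD d N j ⌊u * (N : ℝ) ^ (d - 1)⌋₊ ω)
                (δ ^ 4 * (N : ℝ) ^ (2 * d))}).toReal ∧
      ((lawP d N (Pl N))
            {ω | ∀ j : ℤ, |j| ≤ 2 * (N : ℤ) ^ (2 * d - 1) →
              gtReal (DD d N j ⌊u * (N : ℝ) ^ (d - 1)⌋₊ ω)
                (δ ^ 4 * (N : ℝ) ^ (2 * d))}).toReal ≤ 1 := by
  have ev1 : ∀ᶠ N : ℕ in atTop, 8 ≤ δ * (N : ℝ) :=
    (tendsto_natCast_atTop_atTop.const_mul_atTop hδ).eventually_ge_atTop 8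
  have ev2 : ∀ᶠ N : ℕ in atTop, 4 ≤ u * (N : ℝ) :=
    (tendsto_natCast_atTop_atTop.const_mul_atTop hu).eventually_ge_atTop 4
  have ev3 : ∀ᶠ N : ℕ in atTop,
      (4 * (N : ℝ) ^ (2 * d - 1) + 1) * Real.exp (-(u / 32 * N)) < δ :=
    (err_tendsto d (u / 32) (by positivity)).eventually_lt_const hδ
  filter_upwards [ev1, ev2, ev3, eventually_ge_atTop 1] with N h1 h2 h3 hN
  have hNr : (1 : ℝ) ≤ N := by exact_mod_cast hN
  have hN0 : (0 : ℝ) < N := by linarith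
  have hpow : (N : ℝ) ^ 2 ≤ (N : ℝ) ^ d := pow_le_pow_right₀ hNr (by omega)
  have hpd : (N : ℝ) ^ d = (N : ℝ) ^ (d - 1) * N := by rw [← pow_succ]; congr 1; omega
  have hp0 : (0 : ℝ) < (N : ℝ) ^ d := by positivity
  have hX8 : 8 * (N : ℝ) ≤ δ * (N : ℝ) ^ d := by nlinarith
  obtain ⟨L, hL1, hL2⟩ := exists_nat_pow_near (x := δ * (N : ℝ) ^ d) (y := (2 : ℝ))
    (by linarith) (by norm_num)
  have hL : 2 ≤ L := by
    by_contra hc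
    have h5 : (2 : ℝ) ^ (L + 1) ≤ 2 ^ 2 := pow_le_pow_right₀ (by norm_num) (by omega)
    linarith
  have eL : (2 : ℝ) ^ (L + 1) = 8 * 2 ^ (L - 2) := by
    obtain ⟨l, rfl⟩ := Nat.exists_eq_add_of_le hL
    have : 2 + l - 2 = l := by omega
    rw [this, pow_succ, pow_add]
    ring
  set k := ⌊u * (N : ℝ) ^ (d - 1)⌋₊ with hk
  set K := k * N / 2 with hK
  set T := ⌊δ ^ 4 * (N : ℝ) ^ (2 * d)⌋₊ with hT
  have hkl : u * (N : ℝ) ^ (d - 1) < k + 1 := Nat.lt_floor_add_one _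
  have hKl : (k : ℝ) * N ≤ 2 * K + 1 := by
    have : k * N ≤ 2 * K + 1 := by omega
    exact_mod_cast this
  have hK4 : u / 4 * (N : ℝ) ^ d ≤ K := by
    have h5 : u * (N : ℝ) ^ d ≤ (k + 1) * N := by
      rw [hpd, ← mul_assoc]
      gcongr
    have h6 : 4 * (N : ℝ) ≤ u * (N : ℝ) ^ d := by nlinarith
    nlinarith
  have hNL : N ≤ 2 ^ (L - 2) := by
    have : (N : ℝ) ≤ 2 ^ (L - 2) := by linarith
    exact_mod_cast this
  have hLK : 2 ^ L ≤ K := by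
    have : (2 : ℝ) ^ L ≤ K := hL1.trans (le_trans (by gcongr) hK4)
    exact_mod_cast this
  have h2d : (N : ℝ) ^ (2 * d) = ((N : ℝ) ^ d) ^ 2 := by rw [← pow_mul, mul_comm]
  have hXX : δ ^ 4 * (N : ℝ) ^ (2 * d) = δ ^ 2 * (δ * (N : ℝ) ^ d) ^ 2 := by rw [h2d]; ring
  have hT1 : 1 ≤ T := by
    rw [hT, Nat.one_le_floor_iff, hXX]
    have h7 : 8 ≤ δ * (δ * (N : ℝ) ^ d) := by nlinarith
    have h8 : δ ^ 2 * (δ * (N : ℝ) ^ d) ^ 2 = (δ * (δ * (N : ℝ) ^ d)) ^ 2 := by ring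
    rw [h8]
    nlinarith
  have hTle : (T : ℝ) ≤ δ ^ 4 * (N : ℝ) ^ (2 * d) := Nat.floor_le (by positivity)
  have hT0 : (0 : ℝ) < T := by exact_mod_cast hT1
  have hbb : u / (147456 * δ) ≤ (K : ℝ) / (4608 * 2 ^ L) / 8 := by
    rw [div_div, div_le_div_iff₀ (by positivity) (by positivity)]
    have h9 : u * (2 : ℝ) ^ L ≤ u * (δ * (N : ℝ) ^ d) := by gcongr
    have h10 : u / 4 * (N : ℝ) ^ d * δ ≤ K * δ := by gcongr
    nlinarith
  have hb1 := Real.exp_le_exp.2 (neg_le_neg hbb)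
  have hRR : 1 / (128 * δ ^ 2) ≤ ((2 : ℝ) ^ (L - 2)) ^ 2 / (2 * T) := by
    rw [div_le_div_iff₀ (by positivity) (by positivity)]
    have h11 : δ * (N : ℝ) ^ d ≤ 8 * 2 ^ (L - 2) := by linarith
    have h12 : (δ * (N : ℝ) ^ d) ^ 2 ≤ (8 * 2 ^ (L - 2)) ^ 2 := by gcongr
    have h13 : δ ^ 2 * (δ * (N : ℝ) ^ d) ^ 2 ≤ δ ^ 2 * (8 * 2 ^ (L - 2)) ^ 2 := by gcongr
    rw [hXX] at hTle
    nlinarith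
  have hR1 := Real.exp_le_exp.2 (neg_le_neg hRR)
  have hKN : u / 32 * N ≤ (K : ℝ) / (8 * N) := by
    rw [le_div_iff₀ (by positivity)]
    have h15 : u / 4 * (N : ℝ) ^ 2 ≤ u / 4 * (N : ℝ) ^ d := by gcongr
    have h16 : u / 32 * N * (8 * N) = u / 4 * (N : ℝ) ^ 2 := by ring
    linarith
  have hK1 := Real.exp_le_exp.2 (neg_le_neg hKN)
  refine lawP_good hN (hPl N) _
    {ω | ∃ j : ℤ, |j| ≤ (2 * N ^ (2 * d - 1) : ℕ) ∧ ∃ n ≤ T, DD d N j k ω = (n : ℕ)} ?_ _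
    (by positivity) ?_
  · intro ω hω
    simp only [Set.mem_compl_iff, Set.mem_ofPred_eq, gtReal] at hω
    push Not at hω
    obtain ⟨j, hj, n, hn, hn2⟩ := hω
    refine ⟨j, by push_cast; exact hj, n, Nat.le_floor hn2, hn⟩
  · refine lawP_le hN _ _ _ fun x hx => ?_
    refine (bad_prob (hPl N) x hx L K T (2 * N ^ (2 * d - 1)) k hN hL hNL hLK (by omega) hT1
      (hb1.trans hδ4)).trans ?_
    refine ENNReal.ofReal_le_ofReal ?_
    have h14 : (2 * ((2 * N ^ (2 * d - 1) : ℕ) : ℝ) + 1) * Real.exp (-((K : ℝ) / (8 * N))) ≤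
        δ := by
      refine le_trans ?_ h3.le
      push_cast
      have : 2 * (2 * (N : ℝ) ^ (2 * d - 1)) + 1 = 4 * (N : ℝ) ^ (2 * d - 1) + 1 := by ring
      rw [this]
      gcongr
    linarith

theorem exp_small (c : ℝ) (hc : 0 < c) :
    Tendsto (fun δ : ℝ => Real.exp (-(c / δ))) (nhdsWithin 0 (Set.Ioi 0)) (nhds 0) := by
  have h : Tendsto (fun δ : ℝ => c / δ) (nhdsWithin 0 (Set.Ioi 0)) atTop := by
    simp only [div_eq_mul_inv]
    exact tendsto_inv_nhdsGT_zero.const_mul_atTop hc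
  exact Real.tendsto_exp_neg_atTop_nhds_zero.comp h

/-- **(2.4).** If `d ≥ 4` and `7(2/(d+1) + (1 - 2/(d+1)) q(d-1)) < 1`, then for any
`u > 0`, `lim_{γ→0} liminf_N P[D_{γ, uN^{d-1}}] = 1`, where
`D_{γ,t} = ∩_{|j| ≤ 2N^{2d-1}} {D^j_t > γ N^{2d}}`. -/
theorem statement_19 (d : ℕ) (hd : 4 ≤ d)
    (Q : ZLat (d - 1) → Measure (ℕ → ZLat (d - 1))) (hQ : IsLatRW (d - 1) Q)
    (hcond : 7 * (2 / ((d : ℝ) + 1) + (1 - 2 / ((d : ℝ) + 1)) * retProb (d - 1) Q) < 1)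
    (Pl : ∀ N : ℕ, Cyl d N → Measure (ℕ → Cyl d N))
    (hPl : ∀ N : ℕ, IsCylRW d N (Pl N))
    (u : ℝ) (hu : 0 < u) :
    Tendsto (fun γ : ℝ =>
        liminf (fun N : ℕ =>
          ((lawP d N (Pl N))
            {ω | ∀ j : ℤ, |j| ≤ 2 * (N : ℤ) ^ (2 * d - 1) →
              gtReal (DD d N j ⌊u * (N : ℝ) ^ (d - 1)⌋₊ ω) (γ * (N : ℝ) ^ (2 * d))}).toReal)
          atTop)
      (nhdsWithin 0 (Set.Ioi 0)) (nhds 1) := by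
  have key : Tendsto (fun δ : ℝ =>
        liminf (fun N : ℕ =>
          ((lawP d N (Pl N))
            {ω | ∀ j : ℤ, |j| ≤ 2 * (N : ℤ) ^ (2 * d - 1) →
              gtReal (DD d N j ⌊u * (N : ℝ) ^ (d - 1)⌋₊ ω) (δ ^ 4 * (N : ℝ) ^ (2 * d))}).toReal)
          atTop)
      (nhdsWithin 0 (Set.Ioi 0)) (nhds 1) := by
    have t1 := exp_small (u / 147456) (by positivity)
    have t2 : Tendsto (fun δ : ℝ => Real.exp (-(1 / 128 / (δ ^ 2))))
        (nhdsWithin 0 (Set.Ioi 0)) (nhds 0) := by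
      refine (exp_small (1 / 128) (by norm_num)).comp ?_
      refine tendsto_nhdsWithin_iff.2 ⟨?_, ?_⟩
      · have : Tendsto (fun δ : ℝ => δ ^ 2) (nhds 0) (nhds (0 ^ 2)) :=
          (continuous_pow 2).tendsto 0
        rw [zero_pow (by norm_num)] at this
        exact this.mono_left nhdsWithin_le_nhds
      · filter_upwards [self_mem_nhdsWithin] with δ hδ
        have : (0 : ℝ) < δ := hδ
        exact Set.mem_Ioi.2 (by positivity)
    have t3 : Tendsto (fun δ : ℝ => δ) (nhdsWithin 0 (Set.Ioi 0)) (nhds 0) :=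
      tendsto_id.mono_left nhdsWithin_le_nhds
    have t4 : Tendsto (fun δ : ℝ => 1 - (2 * Real.exp (-(1 / (128 * δ ^ 2))) +
        8 * Real.exp (-(u / (147456 * δ))) + δ)) (nhdsWithin 0 (Set.Ioi 0)) (nhds 1) := by
      have := (((t2.const_mul 2).add (t1.const_mul 8)).add t3).const_sub 1
      simp only [mul_zero, add_zero, sub_zero] at this
      simp only [← div_div]
      exact this
    have hev : ∀ᶠ δ : ℝ in nhdsWithin 0 (Set.Ioi 0), 0 < δ ∧ δ ≤ u / 4 ∧
        Real.exp (-(u / (147456 * δ))) ≤ 1 / 4 := by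
      have e2 := t3.eventually_le_const (show (0 : ℝ) < u / 4 by positivity)
      have e3 := t1.eventually_le_const (show (0 : ℝ) < 1 / 4 by norm_num)
      filter_upwards [self_mem_nhdsWithin, e2, e3] with δ h1 h2 h3
      refine ⟨h1, h2, ?_⟩
      rw [← div_div]
      exact h3
    refine tendsto_of_tendsto_of_tendsto_of_le_of_le' t4 tendsto_const_nhds ?_ ?_
    · filter_upwards [hev] with δ ⟨h1, h2, h3⟩
      have hm := main_est d hd Pl hPl u hu δ h1 h2 h3
      refine le_liminf_of_le ?_ (hm.mono fun N h => h.1)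
      exact IsBoundedUnder.isCoboundedUnder_ge ⟨1, by
        rw [eventually_map]; exact hm.mono fun N h => h.2⟩
    · filter_upwards [hev] with δ ⟨h1, h2, h3⟩
      have hm := main_est d hd Pl hPl u hu δ h1 h2 h3
      refine liminf_le_of_le ?_ ?_
      · exact ⟨0, by
          rw [eventually_map]; exact Eventually.of_forall fun N => ENNReal.toReal_nonneg⟩
      · intro b hb
        obtain ⟨N, hN1, hN2⟩ := (hb.and hm).exists
        exact hN1.trans hN2.2
  have hroot : Tendsto (fun γ : ℝ => γ ^ (1 / 4 : ℝ)) (nhdsWithin 0 (Set.Ioi 0))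
      (nhdsWithin 0 (Set.Ioi 0)) := by
    refine tendsto_nhdsWithin_iff.2 ⟨?_, ?_⟩
    · have : Tendsto (fun γ : ℝ => γ ^ (1 / 4 : ℝ)) (nhds 0) (nhds (0 ^ (1 / 4 : ℝ))) :=
        (Real.continuousAt_rpow_const 0 (1 / 4) (Or.inr (by norm_num))).tendsto
      rw [Real.zero_rpow (by norm_num)] at this
      exact this.mono_left nhdsWithin_le_nhds
    · filter_upwards [self_mem_nhdsWithin] with γ hγ
      exact Real.rpow_pos_of_pos hγ _
  refine (key.comp hroot).congr' ?_
  filter_upwards [self_mem_nhdsWithin] with γ hγ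
  have hγ0 : (0 : ℝ) < γ := hγ
  have e : (γ ^ (1 / 4 : ℝ)) ^ 4 = γ := by
    rw [← Real.rpow_natCast, ← Real.rpow_mul hγ0.le]
    norm_num
  simp only [Function.comp, e]

end DiscCyl
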